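/- Let δ > 0 and let u ∈ C²(S² ∩ B_δ(S) \ {S}) be a (−1)-homogeneous axisymmetric solution of the stationary Navier–Stokes equations, and let τ := lim_{x∈S², x→S} |x'| u_θ(x) (which exists and is finite). Suppose τ = 2. Then η := lim_{x∈S², x→S} (|x'| u_θ(x) − 2) ln|x'| exists and η ∈ {0, 2}. If η = 0, then lim_{x∈S², x→S} |x'|^ε u_r(x) = 0 for every ε > 0, and either |x'| u_φ is constant on S² near S or lim_{x∈S², x→S} |x'| u_φ(x)/ln|x'| exists, is finite, and is nonzero. If η = 2, then lim_{x∈S², x→S} |x'|² (ln|x'|)² u_r(x) = −2, and lim_{x∈S², x→S} |x'| u_φ(x) exists and is finite. -/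

import Mathlib

noncomputable section

open Real Filter MeasureTheory Metric Topology
open scoped ENNReal InnerProductSpace

abbrev V3 := EuclideanSpace ℝ (Fin 3)
abbrev V2 := EuclideanSpace ℝ (Fin 2)

/-- standard basis vector in `ℝ³` -/
def e3 (j : Fin 3) : V3 := EuclideanSpace.single j 1

/-- partial derivative `∂_j f` -/
def pd (j : Fin 3) (f : V3 → ℝ) (x : V3) : ℝ := fderiv ℝ f x (e3 j)

/-- Laplacian on `ℝ³` -/
def lap3 (f : V3 → ℝ) (x : V3) : ℝ := ∑ j, pd j (fun y => pd j f y) x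

/-- stationary Navier–Stokes equations `-Δu + (u·∇)u + ∇p = 0`, `div u = 0` at `x` -/
def NSEq (u : V3 → V3) (p : V3 → ℝ) (x : V3) : Prop :=
  (∀ i, - lap3 (fun z => u z i) x + (∑ j, u x j * pd j (fun z => u z i) x) + pd i p x = 0)
  ∧ (∑ j, pd j (fun z => u z j) x) = 0

/-- stationary Euler equations `(u·∇)u + ∇p = 0`, `div u = 0` at `x` -/
def EulerEq (u : V3 → V3) (p : V3 → ℝ) (x : V3) : Prop :=
  (∀ i, (∑ j, u x j * pd j (fun z => u z i) x) + pd i p x = 0)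
  ∧ (∑ j, pd j (fun z => u z j) x) = 0

/-- south pole -/
def S3 : V3 := EuclideanSpace.single 2 (-1)
/-- north pole -/
def N3 : V3 := EuclideanSpace.single 2 1

/-- the unit sphere `S²` -/
def sphere2 : Set V3 := Metric.sphere (0 : V3) 1

/-- the open cone over a subset of the unit sphere -/
def cone3 (Ω : Set V3) : Set V3 := {x : V3 | x ≠ 0 ∧ (‖x‖⁻¹ • x) ∈ Ω}

/-- `|x'| = √(x₁² + x₂²)` -/
def rho (x : V3) : ℝ := Real.sqrt ((x 0) ^ 2 + (x 1) ^ 2)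

/-- the `x₃`-axis `{x' = 0}` -/
def axis3 : Set V3 := {x : V3 | x 0 = 0 ∧ x 1 = 0}

/-- `Ω_{a,b,R} = {a < x₃ < b, |x'| < R}` -/
def OmegaR (a b R : ℝ) : Set V3 := {x : V3 | a < x 2 ∧ x 2 < b ∧ rho x < R}

/-- build a point of `ℝ³` from `x' ∈ ℝ²` and `x₃ ∈ ℝ` -/
def emb (y : V2) (t : ℝ) : V3 := (EuclideanSpace.equiv (Fin 3) ℝ).symm ![y 0, y 1, t]

/-- spherical component `u_r = u · e_r` -/
def uRc (u : V3 → V3) (x : V3) : ℝ := (u x 0 * x 0 + u x 1 * x 1 + u x 2 * x 2) / ‖x‖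

/-- spherical component `u_θ = u · e_θ` -/
def uTc (u : V3 → V3) (x : V3) : ℝ :=
  (u x 0 * x 0 * x 2 + u x 1 * x 1 * x 2) / (‖x‖ * rho x) - u x 2 * rho x / ‖x‖

/-- spherical component `u_φ = u · e_φ` -/
def uPc (u : V3 → V3) (x : V3) : ℝ := (-(u x 0) * x 1 + u x 1 * x 0) / rho x

/-- axisymmetry on a set: the spherical components are independent of the meridian angle -/
def AxisymOn (u : V3 → V3) (Ω : Set V3) : Prop :=
  ∀ x ∈ Ω, ∀ y ∈ Ω, ‖x‖ = ‖y‖ → x 2 = y 2 →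
    uRc u x = uRc u y ∧ uTc u x = uTc u y ∧ uPc u x = uPc u y

/-- spherical frame vector `e_r` -/
def eRv (x : V3) : V3 := ‖x‖⁻¹ • x

/-- spherical frame vector `e_θ` -/
def eThv (x : V3) : V3 := (EuclideanSpace.equiv (Fin 3) ℝ).symm
  ![x 2 * x 0 / (‖x‖ * rho x), x 2 * x 1 / (‖x‖ * rho x), -(rho x) / ‖x‖]

/-- spherical frame vector `e_φ` -/
def ePhv (x : V3) : V3 := (EuclideanSpace.equiv (Fin 3) ℝ).symm ![-(x 1) / rho x, x 0 / rho x, 0]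

/-- the spherical cap `S² ∩ B_δ(S) \ {S}` -/
def NSCap (δ : ℝ) : Set V3 := (sphere2 ∩ Metric.ball S3 δ) \ {S3}

/-- the spherical cap `S² ∩ B_δ(S)` -/
def NSCapFull (δ : ℝ) : Set V3 := sphere2 ∩ Metric.ball S3 δ

/-!
On the unit sphere a `(-1)`-homogeneous axisymmetric field has the form
`A x + B (-x₂, x₁, 0) - N e₃`, with `A`, `B`, `N` functions of the height `x₃`. The Navier–Stokes
equations then become a system of ordinary differential equations in `t = 1 + x₃` for
`F = |x'| u_θ`, `H = u_r = F'` and `G = |x'| u_φ`. The swirl equation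
`G'' = -F G' / (t (2 - t))` is Fuchsian at `t = 0`, so `F → 2` bounds `G'` by `t ^ (-1 - ε)`.
Inserting this into the radial momentum equation, integrated three times, leaves the perturbed
Riccati equation `t F' + (F - 2)² / 4 = O(t ^ (1 - ε))`. Its solutions tending to `2` either
satisfy `F - 2 = O(t ^ (1 - ε))` or `(F - 2) log t → 4`. As `log t ~ 2 log |x'|` at the pole,
these are the cases `η = 0` and `η = 2`, and in each of them the swirl equation determines the
behaviour of `G`.
-/

/-! ### Differential inequalities to the right of a point -/

section OneSided

variable {g g' Φ φ : ℝ → ℝ} {a : ℝ}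

lemma exists_monotoneOn_Ioo_of_deriv_nonneg
    (hg : ∀ᶠ t in 𝓝[>] a, HasDerivAt g (g' t) t) (hg' : ∀ᶠ t in 𝓝[>] a, 0 ≤ g' t) :
    ∃ b > a, MonotoneOn g (Set.Ioo a b) := by
  obtain ⟨b, hb, hs⟩ := mem_nhdsGT_iff_exists_Ioo_subset.1 (hg.and hg')
  refine ⟨b, hb, monotoneOn_of_hasDerivWithinAt_nonneg (convex_Ioo a b) (f' := g')
    (fun t ht => (hs ht).1.continuousAt.continuousWithinAt) ?_ ?_⟩ <;> rw [interior_Ioo]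
  · exact fun t ht => (hs ht).1.hasDerivWithinAt
  · exact fun t ht => (hs ht).2

lemma exists_eventually_le_of_deriv_nonneg
    (hg : ∀ᶠ t in 𝓝[>] a, HasDerivAt g (g' t) t) (hg' : ∀ᶠ t in 𝓝[>] a, 0 ≤ g' t) :
    ∃ c, ∀ᶠ t in 𝓝[>] a, g t ≤ c := by
  obtain ⟨b, hb, hmono⟩ := exists_monotoneOn_Ioo_of_deriv_nonneg hg hg'
  obtain ⟨m, ham, hmb⟩ := exists_between hb
  refine ⟨g m, ?_⟩
  filter_upwards [Ioo_mem_nhdsGT ham] with t ht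
  exact hmono ⟨ht.1, ht.2.trans hmb⟩ ⟨ham, hmb⟩ ht.2.le

lemma exists_tendsto_of_deriv_nonneg
    (hg : ∀ᶠ t in 𝓝[>] a, HasDerivAt g (g' t) t) (hg' : ∀ᶠ t in 𝓝[>] a, 0 ≤ g' t)
    {c : ℝ} (hc : ∀ᶠ t in 𝓝[>] a, c ≤ g t) : ∃ l, Tendsto g (𝓝[>] a) (𝓝 l) := by
  obtain ⟨b, hb, hmono⟩ := exists_monotoneOn_Ioo_of_deriv_nonneg hg hg'
  obtain ⟨e, he, hs⟩ := mem_nhdsGT_iff_exists_Ioo_subset.1 hc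
  have hmono' := hmono.mono (Set.Ioo_subset_Ioo_right (min_le_left b e))
  refine ⟨_, hmono'.tendsto_nhdsWithin_Ioo_right (Set.nonempty_Ioo.2 (lt_min hb he)) ⟨c, ?_⟩⟩
  rintro _ ⟨t, ht, rfl⟩
  exact hs ⟨ht.1, ht.2.trans_le (min_le_right _ _)⟩

lemma eventually_limit_le_of_deriv_nonneg
    (hg : ∀ᶠ t in 𝓝[>] a, HasDerivAt g (g' t) t) (hg' : ∀ᶠ t in 𝓝[>] a, 0 ≤ g' t)
    {l : ℝ} (hl : Tendsto g (𝓝[>] a) (𝓝 l)) : ∀ᶠ t in 𝓝[>] a, l ≤ g t := by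
  obtain ⟨b, hb, hmono⟩ := exists_monotoneOn_Ioo_of_deriv_nonneg hg hg'
  filter_upwards [Ioo_mem_nhdsGT hb] with t ht
  refine le_of_tendsto hl ?_
  filter_upwards [Ioo_mem_nhdsGT ht.1] with s hs
  exact hmono ⟨hs.1, hs.2.trans ht.2⟩ ht hs.2.le

lemma exists_eventually_abs_le_sub_of_abs_deriv_le
    (hg : ∀ᶠ t in 𝓝[>] a, HasDerivAt g (g' t) t) (hΦ : ∀ᶠ t in 𝓝[>] a, HasDerivAt Φ (φ t) t)
    (hle : ∀ᶠ t in 𝓝[>] a, |g' t| ≤ φ t) : ∃ c, ∀ᶠ t in 𝓝[>] a, |g t| ≤ c - Φ t := by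
  obtain ⟨c₁, h₁⟩ := exists_eventually_le_of_deriv_nonneg
    (hΦ.mp <| hg.mono fun _ hg hΦ => hΦ.add hg)
    (hle.mono fun _ h => neg_le_iff_add_nonneg'.1 (neg_le_of_abs_le h))
  obtain ⟨c₂, h₂⟩ := exists_eventually_le_of_deriv_nonneg
    (hΦ.mp <| hg.mono fun _ hg hΦ => hΦ.sub hg)
    (hle.mono fun _ h => sub_nonneg.2 (le_of_abs_le h))
  refine ⟨max c₁ c₂, ?_⟩
  filter_upwards [h₁, h₂] with t h₁ h₂
  simp only [Pi.add_apply, Pi.sub_apply] at h₁ h₂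
  exact abs_le.2 ⟨by linarith [le_max_right c₁ c₂], by linarith [le_max_left c₁ c₂]⟩

lemma exists_abs_sub_le_of_abs_deriv_le
    (hg : ∀ᶠ t in 𝓝[>] a, HasDerivAt g (g' t) t) (hΦ : ∀ᶠ t in 𝓝[>] a, HasDerivAt Φ (φ t) t)
    (hle : ∀ᶠ t in 𝓝[>] a, |g' t| ≤ φ t) (hΦ₀ : Tendsto Φ (𝓝[>] a) (𝓝 0)) :
    ∃ l, ∀ᶠ t in 𝓝[>] a, |g t - l| ≤ Φ t := by
  have hadd := hΦ.mp <| hg.mono fun _ hg hΦ => hΦ.add hg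
  have hsub := hΦ.mp <| hg.mono fun _ hg hΦ => hΦ.sub hg
  have hadd' : ∀ᶠ t in 𝓝[>] a, 0 ≤ φ t + g' t :=
    hle.mono fun _ h => neg_le_iff_add_nonneg'.1 (neg_le_of_abs_le h)
  have hsub' : ∀ᶠ t in 𝓝[>] a, 0 ≤ φ t - g' t := hle.mono fun _ h => sub_nonneg.2 (le_of_abs_le h)
  obtain ⟨c, hc⟩ := exists_eventually_abs_le_sub_of_abs_deriv_le hg hΦ hle
  have hbelow : ∀ᶠ t in 𝓝[>] a, -c - 2 ≤ Φ t + g t := by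
    filter_upwards [hc, hΦ₀.eventually (lt_mem_nhds neg_one_lt_zero)] with t hc hΦ
    linarith [neg_le_of_abs_le hc]
  obtain ⟨l, hl⟩ := exists_tendsto_of_deriv_nonneg hadd hadd' hbelow
  have hgl : Tendsto g (𝓝[>] a) (𝓝 l) := by simpa using hl.sub hΦ₀
  refine ⟨l, ?_⟩
  filter_upwards [eventually_limit_le_of_deriv_nonneg hadd hadd' hl,
    eventually_limit_le_of_deriv_nonneg hsub hsub' (hΦ₀.sub hgl)] with t h₁ h₂
  simp only [Pi.add_apply, Pi.sub_apply] at h₁ h₂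
  exact abs_le.2 ⟨by linarith, by linarith⟩

lemma exists_sub_isBigO_of_deriv_isBigO
    (hg : ∀ᶠ t in 𝓝[>] a, HasDerivAt g (g' t) t) (hΦ : ∀ᶠ t in 𝓝[>] a, HasDerivAt Φ (φ t) t)
    (hφ : ∀ᶠ t in 𝓝[>] a, 0 ≤ φ t) (hO : g' =O[𝓝[>] a] φ) (hΦ₀ : Tendsto Φ (𝓝[>] a) (𝓝 0)) :
    ∃ l, (fun t => g t - l) =O[𝓝[>] a] Φ := by
  obtain ⟨C, hC, hbound⟩ := hO.exists_nonneg
  obtain ⟨l, hl⟩ := exists_abs_sub_le_of_abs_deriv_le (Φ := fun t => C * Φ t) hg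
    (hΦ.mono fun _ h => h.const_mul C)
    (by filter_upwards [hbound.bound, hφ] with t h hφ
        rwa [norm_eq_abs, norm_of_nonneg hφ] at h)
    (by simpa using hΦ₀.const_mul C)
  refine ⟨l, .of_bound C (hl.mono fun t h => h.trans ?_)⟩
  exact mul_le_mul_of_nonneg_left (le_abs_self _) hC

lemma isBigO_of_deriv_isBigO
    (hg : ∀ᶠ t in 𝓝[>] a, HasDerivAt g (g' t) t) (hΦ : ∀ᶠ t in 𝓝[>] a, HasDerivAt Φ (φ t) t)
    (hφ : ∀ᶠ t in 𝓝[>] a, 0 ≤ φ t) (hO : g' =O[𝓝[>] a] φ) (hΦ₀ : Tendsto Φ (𝓝[>] a) atBot) :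
    g =O[𝓝[>] a] Φ := by
  obtain ⟨C, hbound⟩ := hO.bound
  obtain ⟨c, hc⟩ := exists_eventually_abs_le_sub_of_abs_deriv_le (Φ := fun t => C * Φ t) hg
    (hΦ.mono fun _ h => h.const_mul C)
    (by filter_upwards [hbound, hφ] with t h hφ
        rwa [norm_eq_abs, norm_of_nonneg hφ] at h)
  have hconst : (fun _ => c) =O[𝓝[>] a] Φ :=
    (Asymptotics.isLittleO_const_left.2 (Or.inr (tendsto_abs_atBot_atTop.comp hΦ₀))).isBigO
  exact (Asymptotics.IsBigO.of_bound' (hc.mono fun t h => h.trans (le_abs_self _))).trans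
    (hconst.sub ((Asymptotics.isBigO_refl Φ _).const_mul_left C))

lemma isBigO_inv_of_linear_ode {p w w' : ℝ → ℝ}
    (hg : ∀ᶠ t in 𝓝[>] a, HasDerivAt g (-(p t * g t)) t)
    (hw : ∀ᶠ t in 𝓝[>] a, HasDerivAt w (w' t) t) (hw₀ : ∀ᶠ t in 𝓝[>] a, 0 < w t)
    (hle : ∀ᶠ t in 𝓝[>] a, p t * w t ≤ w' t) : g =O[𝓝[>] a] fun t => (w t)⁻¹ := by
  obtain ⟨c, hc⟩ := exists_eventually_le_of_deriv_nonneg (hw.mp <| hg.mono fun t hg hw =>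
    ((hw.mul hg).pow 2).congr_deriv (show _ = 2 * w t * g t ^ 2 * (w' t - p t * w t) by
      simp only [Pi.mul_apply]; push_cast; ring))
    (by filter_upwards [hw₀, hle] with t hw hle
        have := sub_nonneg.2 hle
        positivity)
  refine .of_bound √c ?_
  filter_upwards [hc, hw₀] with t hc hw
  have habs : |w t * g t| ≤ √c := abs_le_sqrt hc
  rw [abs_mul, abs_of_pos hw] at habs
  rw [norm_of_nonneg (inv_pos.2 hw).le, ← div_eq_mul_inv, le_div_iff₀ hw, mul_comm]
  exact habs

lemma eventually_eq_zero_of_linear_ode {p w w' : ℝ → ℝ}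
    (hg : ∀ᶠ t in 𝓝[>] a, HasDerivAt g (-(p t * g t)) t)
    (hw : ∀ᶠ t in 𝓝[>] a, HasDerivAt w (w' t) t) (hw₀ : ∀ᶠ t in 𝓝[>] a, 0 < w t)
    (hle : ∀ᶠ t in 𝓝[>] a, w' t ≤ p t * w t)
    (hlim : Tendsto (fun t => w t * g t) (𝓝[>] a) (𝓝 0)) : ∀ᶠ t in 𝓝[>] a, g t = 0 := by
  have hneg := eventually_limit_le_of_deriv_nonneg (l := 0) (hw.mp <| hg.mono fun t hg hw =>
    ((hw.mul hg).pow 2).neg.congr_deriv (show _ = 2 * w t * g t ^ 2 * (p t * w t - w' t) by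
      simp only [Pi.mul_apply]; push_cast; ring))
    (by filter_upwards [hw₀, hle] with t hw hle
        have := sub_nonneg.2 hle
        positivity)
    (by simpa using! (hlim.pow 2).neg)
  filter_upwards [hneg, hw₀] with t h hw
  have hsq : (w t * g t) ^ 2 ≤ 0 := neg_nonneg.1 h
  simpa [hw.ne'] using pow_eq_zero_iff two_ne_zero |>.1 (hsq.antisymm (sq_nonneg _))

end OneSided

/-! ### Fuchsian and Riccati equations near `0` -/

section PowersAndLogs

lemma tendsto_id_nhdsGT_zero : Tendsto (fun t : ℝ => t) (𝓝[>] 0) (𝓝 0) :=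
  tendsto_id.mono_left nhdsWithin_le_nhds

lemma eventually_hasDerivAt_rpow (b : ℝ) :
    ∀ᶠ t in 𝓝[>] (0 : ℝ), HasDerivAt (fun t : ℝ => t ^ b) (b * t ^ (b - 1)) t := by
  filter_upwards [self_mem_nhdsWithin] with t ht
  exact hasDerivAt_rpow_const (Or.inl (ne_of_gt ht))

lemma tendsto_rpow_nhdsGT_zero {b : ℝ} (hb : 0 < b) :
    Tendsto (fun t : ℝ => t ^ b) (𝓝[>] 0) (𝓝 0) := by
  have h := (continuousAt_rpow_const 0 b (Or.inr hb.le)).tendsto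
  rw [zero_rpow hb.ne'] at h
  exact h.mono_left nhdsWithin_le_nhds

lemma rpow_isBigO_rpow_nhdsGT_zero {a b : ℝ} (hba : b ≤ a) :
    (fun t : ℝ => t ^ a) =O[𝓝[>] 0] fun t => t ^ b := by
  refine .of_bound' ?_
  filter_upwards [Ioo_mem_nhdsGT one_pos] with t ht
  rw [norm_of_nonneg (rpow_nonneg ht.1.le _), norm_of_nonneg (rpow_nonneg ht.1.le _)]
  exact rpow_le_rpow_of_exponent_ge ht.1 ht.2.le hba

lemma inv_isBigO_rpow_neg_one (l : Filter ℝ) : (fun t : ℝ => t⁻¹) =O[l] fun t => t ^ (-1 : ℝ) := by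
  simpa only [rpow_neg_one] using Asymptotics.isBigO_refl _ _

variable {f g : ℝ → ℝ}

lemma isBigO_rpow_mul {a b c : ℝ} (hf : f =O[𝓝[>] 0] fun t => t ^ a)
    (hg : g =O[𝓝[>] 0] fun t => t ^ b) (hc : c ≤ a + b) :
    (fun t => f t * g t) =O[𝓝[>] 0] fun t => t ^ c := by
  refine ((hf.mul hg).congr' .rfl ?_).trans (rpow_isBigO_rpow_nhdsGT_zero hc)
  filter_upwards [self_mem_nhdsWithin] with t ht
  rw [rpow_add ht]

lemma exists_sub_isBigO_rpow_of_deriv {g' : ℝ → ℝ} {b : ℝ}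
    (hg : ∀ᶠ t in 𝓝[>] 0, HasDerivAt g (g' t) t) (hb : 0 < b)
    (hO : g' =O[𝓝[>] 0] fun t => t ^ (b - 1)) :
    ∃ l, (fun t => g t - l) =O[𝓝[>] 0] fun t => t ^ b := by
  obtain ⟨l, hl⟩ := exists_sub_isBigO_of_deriv_isBigO hg (eventually_hasDerivAt_rpow b)
    (by filter_upwards [self_mem_nhdsWithin] with t ht
        exact mul_nonneg hb.le (rpow_nonneg (le_of_lt ht) _))
    (hO.const_mul_right hb.ne') (tendsto_rpow_nhdsGT_zero hb)
  exact ⟨l, hl⟩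

lemma isBigO_rpow_of_deriv {g' : ℝ → ℝ} {b : ℝ}
    (hg : ∀ᶠ t in 𝓝[>] 0, HasDerivAt g (g' t) t) (hb : b < 0)
    (hO : g' =O[𝓝[>] 0] fun t => t ^ (b - 1)) : g =O[𝓝[>] 0] fun t => t ^ b := by
  refine (isBigO_of_deriv_isBigO hg
    ((eventually_hasDerivAt_rpow b).mono fun t ht => ht.neg) ?_ ?_ ?_).of_neg_right
  · filter_upwards [self_mem_nhdsWithin] with t ht
    exact neg_nonneg.2 (mul_nonpos_of_nonpos_of_nonneg hb.le (rpow_nonneg (le_of_lt ht) _))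
  · exact (hO.const_mul_right hb.ne).neg_right
  · exact tendsto_neg_atTop_atBot.comp (tendsto_rpow_neg_nhdsGT_zero hb)

lemma eventually_hasDerivAt_neg_log_rpow (b : ℝ) :
    ∀ᶠ t in 𝓝[>] (0 : ℝ), HasDerivAt (fun t => (-log t) ^ b) (-(b * (-log t) ^ (b - 1)) / t) t := by
  filter_upwards [Ioo_mem_nhdsGT one_pos] with t ht
  refine ((hasDerivAt_log ht.1.ne').neg.rpow_const
    (Or.inl (neg_pos.2 (log_neg ht.1 ht.2)).ne')).congr_deriv ?_
  simp only [Pi.neg_apply]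
  ring

lemma eventually_neg_log_pos : ∀ᶠ t in 𝓝[>] (0 : ℝ), 0 < -log t :=
  (tendsto_neg_atBot_atTop.comp tendsto_log_nhdsGT_zero).eventually_gt_atTop 0

lemma exists_tendsto_of_deriv_isBigO_neg_log {g' : ℝ → ℝ} {b : ℝ}
    (hg : ∀ᶠ t in 𝓝[>] 0, HasDerivAt g (g' t) t) (hb : 1 < b)
    (hO : g' =O[𝓝[>] 0] fun t => (-log t) ^ (-b) / t) : ∃ l, Tendsto g (𝓝[>] 0) (𝓝 l) := by
  have hΦ₀ : Tendsto (fun t => (-log t) ^ (1 - b)) (𝓝[>] 0) (𝓝 0) := by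
    have h := (tendsto_rpow_neg_atTop (sub_pos.2 hb)).comp
      (tendsto_neg_atBot_atTop.comp tendsto_log_nhdsGT_zero)
    rwa [neg_sub] at h
  have hb' : b - 1 ≠ 0 := (sub_pos.2 hb).ne'
  obtain ⟨l, hl⟩ := exists_sub_isBigO_of_deriv_isBigO hg
    ((eventually_hasDerivAt_neg_log_rpow (1 - b)).mono fun t ht =>
      ht.congr_deriv (show _ = (b - 1) * ((-log t) ^ (-b) / t) by
        rw [show 1 - b - 1 = -b by ring]; ring))
    (by filter_upwards [self_mem_nhdsWithin, eventually_neg_log_pos] with t ht hlog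
        have : 0 < t := ht
        have := sub_pos.2 hb
        positivity)
    (hO.const_mul_right hb') hΦ₀
  exact ⟨l, tendsto_sub_nhds_zero_iff.1 (hl.trans_tendsto hΦ₀)⟩

lemma tendsto_div_log_of_tendsto_sub {c l : ℝ}
    (h : Tendsto (fun t => f t - c * log t) (𝓝[>] 0) (𝓝 l)) :
    Tendsto (fun t => f t / log t) (𝓝[>] 0) (𝓝 c) := by
  have hdiv : Tendsto (fun t => (f t - c * log t) / log t + c) (𝓝[>] 0) (𝓝 c) := by
    simpa using (h.div_atBot tendsto_log_nhdsGT_zero).add_const c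
  refine hdiv.congr' ?_
  filter_upwards [tendsto_log_nhdsGT_zero.eventually_ne_atBot 0] with t ht
  field_simp
  ring

lemma eq_zero_of_tendsto_of_tendsto_mul_deriv {f' : ℝ → ℝ} {c m : ℝ}
    (hf : ∀ᶠ t in 𝓝[>] 0, HasDerivAt f (f' t) t) (hc : Tendsto f (𝓝[>] 0) (𝓝 c))
    (hm : Tendsto (fun t => t * f' t) (𝓝[>] 0) (𝓝 m)) : m = 0 := by
  have hid := tendsto_id_nhdsGT_zero
  have hquot : Tendsto (fun t => t * f t / t) (𝓝[>] 0) (𝓝 (c + m)) := by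
    refine HasDerivAt.lhopital_zero_nhdsGT (f' := fun t => f t + t * f' t) (g' := fun _ => 1)
      (hf.mono fun t ht => ?_) (.of_forall fun t => hasDerivAt_id t)
      (.of_forall fun _ => one_ne_zero) (by simpa using hid.mul hc) hid (by simpa using hc.add hm)
    simpa using! (hasDerivAt_id t).mul ht
  have hcm := tendsto_nhds_unique (hquot.congr' (by
    filter_upwards [self_mem_nhdsWithin] with t ht
    exact mul_div_cancel_left₀ _ (ne_of_gt ht))) hc
  linarith

end PowersAndLogs

section FuchsianEquation

variable {f g q : ℝ → ℝ} {b k m : ℝ}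

lemma isBigO_rpow_of_fuchsian_ode
    (hg : ∀ᶠ t in 𝓝[>] 0, HasDerivAt g (-(q t / t * g t)) t)
    (hq : Tendsto q (𝓝[>] 0) (𝓝 m)) (hmb : m < b) : g =O[𝓝[>] 0] fun t => t ^ (-b) := by
  refine (isBigO_inv_of_linear_ode hg (eventually_hasDerivAt_rpow b) ?_ ?_).congr' .rfl ?_
  · filter_upwards [self_mem_nhdsWithin] with t ht using rpow_pos_of_pos ht b
  · filter_upwards [self_mem_nhdsWithin, hq.eventually_le_const hmb] with t ht hqt
    rw [rpow_sub_one (ne_of_gt ht), div_mul_eq_mul_div, ← mul_div_assoc]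
    have : 0 < t := ht
    gcongr
  · filter_upwards [self_mem_nhdsWithin] with t ht
    rw [rpow_neg (le_of_lt ht)]

lemma eventually_eq_zero_of_fuchsian_ode
    (hg : ∀ᶠ t in 𝓝[>] 0, HasDerivAt g (-(q t / t * g t)) t)
    (hq : Tendsto q (𝓝[>] 0) (𝓝 m)) (hbm : -b < m) (hO : g =o[𝓝[>] 0] fun t => t ^ b) :
    ∀ᶠ t in 𝓝[>] 0, g t = 0 := by
  refine eventually_eq_zero_of_linear_ode hg (eventually_hasDerivAt_rpow (-b)) ?_ ?_
    (hO.tendsto_div_nhds_zero.congr' ?_)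
  · filter_upwards [self_mem_nhdsWithin] with t ht using rpow_pos_of_pos ht _
  · filter_upwards [self_mem_nhdsWithin, hq.eventually_const_le hbm] with t ht hqt
    rw [rpow_sub_one (ne_of_gt ht), div_mul_eq_mul_div, ← mul_div_assoc]
    have : 0 < t := ht
    gcongr
  · filter_upwards [self_mem_nhdsWithin] with t ht
    rw [rpow_neg (le_of_lt ht), div_eq_inv_mul]

lemma exists_sub_isBigO_of_fuchsian_ode
    (hg : ∀ᶠ t in 𝓝[>] 0, HasDerivAt g (-(q t / t * g t)) t)
    (hk : 0 < k) (hq : q =O[𝓝[>] 0] fun t => t ^ k) :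
    ∃ c, (fun t => g t - c) =O[𝓝[>] 0] (fun t => t ^ (k / 2)) ∧
      (c = 0 → ∀ᶠ t in 𝓝[>] 0, g t = 0) := by
  have hq₀ := hq.trans_tendsto (tendsto_rpow_nhdsGT_zero hk)
  have hg' : (fun t => -(q t / t * g t)) =O[𝓝[>] 0] fun t => t ^ (k / 2 - 1) := by
    refine (isBigO_rpow_mul (isBigO_rpow_mul hq (inv_isBigO_rpow_neg_one _) le_rfl)
      (isBigO_rpow_of_fuchsian_ode hg hq₀ (half_pos hk)) ?_).neg_left
    linarith
  obtain ⟨c, hc⟩ := exists_sub_isBigO_rpow_of_deriv hg (half_pos hk) hg'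
  refine ⟨c, hc, ?_⟩
  rintro rfl
  refine eventually_eq_zero_of_fuchsian_ode (b := k / 4) hg hq₀ (by linarith) ?_
  simp only [sub_zero] at hc
  refine hc.trans_isLittleO (Asymptotics.isLittleO_of_tendsto' ?_ ?_)
  · filter_upwards [self_mem_nhdsWithin] with t ht h
    exact absurd h (rpow_pos_of_pos ht _).ne'
  · refine (tendsto_rpow_nhdsGT_zero (b := k / 4) (by positivity)).congr' ?_
    filter_upwards [self_mem_nhdsWithin] with t ht
    rw [← rpow_sub ht]
    ring_nf

lemma isBigO_neg_log_rpow_of_fuchsian_ode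
    (hg : ∀ᶠ t in 𝓝[>] 0, HasDerivAt g (-(q t / t * g t)) t)
    (hq : Tendsto (fun t => q t * log t) (𝓝[>] 0) (𝓝 m)) (hbm : b < m) :
    g =O[𝓝[>] 0] fun t => (-log t) ^ (-b) := by
  refine (isBigO_inv_of_linear_ode hg (eventually_hasDerivAt_neg_log_rpow b) ?_ ?_).congr' .rfl ?_
  · filter_upwards [eventually_neg_log_pos] with t ht using rpow_pos_of_pos ht b
  · filter_upwards [self_mem_nhdsWithin, eventually_neg_log_pos, hq.eventually_const_le hbm]
      with t ht hlog hqt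
    have : 0 < t := ht
    rw [div_mul_eq_mul_div, rpow_sub_one hlog.ne', ← mul_div_assoc, ← neg_div]
    gcongr
    rw [le_div_iff₀ hlog]
    nlinarith [rpow_pos_of_pos hlog b]
  · filter_upwards [eventually_neg_log_pos] with t ht
    rw [rpow_neg ht.le]

end FuchsianEquation

section Riccati

variable {f f' : ℝ → ℝ} {a b c k : ℝ}

lemma exists_eventually_le_mul_rpow_of_riccati
    (hf : ∀ᶠ t in 𝓝[>] 0, HasDerivAt f (f' t) t) (hf₀ : Tendsto f (𝓝[>] 0) (𝓝 0)) (ha : 0 ≤ a)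
    (hk : 0 < k) (hO : (fun t => t * f' t + a * f t ^ 2) =O[𝓝[>] 0] fun t => t ^ k) :
    ∃ A, ∀ᶠ t in 𝓝[>] 0, f t ≤ A * t ^ k := by
  obtain ⟨C, hC⟩ := hO.bound
  refine ⟨C / k, ?_⟩
  have hle := eventually_limit_le_of_deriv_nonneg (l := 0)
    (g := fun t => C / k * t ^ k - f t) (g' := fun t => C / k * (k * t ^ (k - 1)) - f' t)
    (hf.mp <| (eventually_hasDerivAt_rpow k).mono fun t hpow hf => (hpow.const_mul _).sub hf)
    (by filter_upwards [hC, self_mem_nhdsWithin] with t hCt ht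
        rw [norm_of_nonneg (rpow_nonneg (le_of_lt ht) k), norm_eq_abs] at hCt
        rw [← mul_assoc, div_mul_cancel₀ _ hk.ne', rpow_sub_one (ne_of_gt ht), ← mul_div_assoc,
          sub_nonneg, le_div_iff₀ ht, mul_comm]
        nlinarith [le_of_abs_le hCt, mul_nonneg ha (sq_nonneg (f t))])
    (by simpa using ((tendsto_rpow_nhdsGT_zero hk).const_mul (C / k)).sub hf₀)
  exact hle.mono fun t ht => sub_nonneg.1 ht

lemma eventually_deriv_nonneg_of_riccati {A C D : ℝ} (hf₀ : Tendsto f (𝓝[>] 0) (𝓝 0))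
    (hb : 0 < b) (hA : ∀ᶠ t in 𝓝[>] 0, f t ≤ A * t ^ k)
    (hC : ∀ᶠ t in 𝓝[>] 0, |t * f' t + a * f t ^ 2| ≤ C * t ^ k)
    (hD : C + 2 * b * |A| ≤ D * (k - b)) :
    ∀ᶠ t in 𝓝[>] 0, 0 ≤ -b * t ^ (-b - 1) * (D * t ^ k + f t) +
      t ^ (-b) * (D * (k * t ^ (k - 1)) + f' t) := by
  have hsmall : ∀ᶠ t in 𝓝[>] 0, |a * f t| < b := by
    have h := (hf₀.const_mul a).abs
    rw [mul_zero, abs_zero] at h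
    exact h.eventually_lt_const hb
  filter_upwards [hA, hC, hsmall, self_mem_nhdsWithin] with t hA hC hsmall ht
  have ht : 0 < t := ht
  have hpow := rpow_pos_of_pos ht k
  have hfactor : -b * t ^ (-b - 1) * (D * t ^ k + f t) + t ^ (-b) * (D * (k * t ^ (k - 1)) + f' t) =
      t ^ (-b - 1) * (D * (k - b) * t ^ k - b * f t + t * f' t) := by
    rw [rpow_sub_one ht.ne', rpow_sub_one ht.ne']
    field_simp
    ring
  rw [hfactor]
  refine mul_nonneg (rpow_nonneg ht.le _) ?_
  have hmain : (b + a * f t) * f t ≤ 2 * b * |A| * t ^ k := by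
    have hbound := abs_lt.1 hsmall
    rcases le_total (f t) 0 with hneg | hpos
    · exact (mul_nonpos_of_nonneg_of_nonpos (by linarith) hneg).trans (by positivity)
    · rw [mul_assoc]
      exact mul_le_mul (by linarith) (hA.trans (by gcongr; exact le_abs_self A)) hpos (by linarith)
  nlinarith [neg_le_of_abs_le hC, mul_le_mul_of_nonneg_right hD hpow.le]

lemma isBigO_rpow_or_eventually_le_of_riccati
    (hf : ∀ᶠ t in 𝓝[>] 0, HasDerivAt f (f' t) t) (hf₀ : Tendsto f (𝓝[>] 0) (𝓝 0)) (ha : 0 ≤ a)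
    (hb : 0 < b) (hbk : b < k) (hO : (fun t => t * f' t + a * f t ^ 2) =O[𝓝[>] 0] fun t => t ^ k) :
    f =O[𝓝[>] 0] (fun t => t ^ k) ∨ ∃ c > 0, ∀ᶠ t in 𝓝[>] 0, f t ≤ -(c * t ^ b) := by
  obtain ⟨A, hA⟩ := exists_eventually_le_mul_rpow_of_riccati hf hf₀ ha (hb.trans hbk) hO
  obtain ⟨C, hC₀, hC⟩ := hO.exists_nonneg
  obtain ⟨D, hD⟩ : ∃ D, D = (C + 2 * b * |A|) / (k - b) := ⟨_, rfl⟩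
  have hkb := sub_pos.2 hbk
  have hD₀ : 0 ≤ D := hD ▸ by positivity
  -- The constant `D` is chosen so that `t ^ (-b) * (D * t ^ k + f t)` is nondecreasing.
  obtain ⟨d, hd, hmono⟩ := exists_monotoneOn_Ioo_of_deriv_nonneg
    (hf.mp <| (eventually_hasDerivAt_rpow (-b)).mp <| (eventually_hasDerivAt_rpow k).mono
      fun t hk hb hf => hb.mul ((hk.const_mul D).add hf))
    (eventually_deriv_nonneg_of_riccati hf₀ hb hA
      (by filter_upwards [hC.bound, self_mem_nhdsWithin] with t h ht
          rwa [norm_eq_abs, norm_of_nonneg (rpow_nonneg (le_of_lt ht) _)] at h)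
      (by rw [hD, div_mul_cancel₀ _ hkb.ne']))
  by_cases hcase : ∀ᶠ t in 𝓝[>] 0, 0 ≤ t ^ (-b) * (D * t ^ k + f t)
  · refine Or.inl (.of_bound (|A| + D) ?_)
    filter_upwards [hcase, hA, self_mem_nhdsWithin] with t hcase hA ht
    have hpow := rpow_pos_of_pos ht k
    have hlow := nonneg_of_mul_nonneg_right hcase (rpow_pos_of_pos ht (-b))
    rw [norm_of_nonneg hpow.le, norm_eq_abs, abs_le]
    constructor <;> nlinarith [le_abs_self A, abs_nonneg A]
  · obtain ⟨t₀, hneg, ht₀⟩ :=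
      ((not_eventually.1 hcase).and_eventually (Ioo_mem_nhdsGT hd)).exists
    refine Or.inr ⟨-(t₀ ^ (-b) * (D * t₀ ^ k + f t₀)), neg_pos.2 (not_le.1 hneg), ?_⟩
    filter_upwards [Ioo_mem_nhdsGT ht₀.1] with t ht
    have hle := hmono ⟨ht.1, ht.2.trans ht₀.2⟩ ht₀ ht.2.le
    simp only [Pi.mul_apply, Pi.add_apply] at hle
    rw [rpow_neg ht.1.le, inv_mul_le_iff₀ (rpow_pos_of_pos ht.1 _)] at hle
    have hDt : 0 ≤ D * t ^ k := mul_nonneg hD₀ (rpow_nonneg ht.1.le k)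
    linarith

lemma tendsto_mul_log_of_riccati
    (hf : ∀ᶠ t in 𝓝[>] 0, HasDerivAt f (f' t) t) (ha : a ≠ 0) (hc : 0 < c) (hbk : 2 * b < k)
    (hO : (fun t => t * f' t + a * f t ^ 2) =O[𝓝[>] 0] fun t => t ^ k)
    (hle : ∀ᶠ t in 𝓝[>] 0, f t ≤ -(c * t ^ b)) :
    Tendsto (fun t => f t * log t) (𝓝[>] 0) (𝓝 a⁻¹) := by
  have hneg : ∀ᶠ t in 𝓝[>] 0, f t < 0 := by
    filter_upwards [hle, self_mem_nhdsWithin] with t ht hpos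
    exact ht.trans_lt (neg_lt_zero.2 (mul_pos hc (rpow_pos_of_pos hpos b)))
  have hinv : (fun t => (f t)⁻¹) =O[𝓝[>] 0] fun t => t ^ (-b) := by
    refine .of_bound c⁻¹ ?_
    filter_upwards [hle, hneg, self_mem_nhdsWithin] with t ht hneg hpos
    have hpow := rpow_pos_of_pos hpos b
    rw [norm_inv, norm_of_nonneg (rpow_nonneg (le_of_lt hpos) _), rpow_neg (le_of_lt hpos),
      ← mul_inv, norm_of_nonpos hneg.le]
    exact inv_anti₀ (by positivity) (by linarith)
  have hrate : (fun t => t⁻¹ * (t * f' t + a * f t ^ 2) * ((f t)⁻¹ * (f t)⁻¹))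
      =O[𝓝[>] 0] fun t => t ^ (k - 2 * b - 1) :=
    isBigO_rpow_mul (isBigO_rpow_mul (inv_isBigO_rpow_neg_one _) hO le_rfl)
      (isBigO_rpow_mul hinv hinv le_rfl) (by linarith)
  obtain ⟨l, hl⟩ := exists_sub_isBigO_rpow_of_deriv (b := k - 2 * b)
    (g := fun t => -((f t)⁻¹ - a * log t)) (by
      filter_upwards [hf, hneg, self_mem_nhdsWithin] with t ht hneg hpos
      have hpos' : t ≠ 0 := ne_of_gt hpos
      refine ((ht.inv hneg.ne).sub ((hasDerivAt_log hpos').const_mul a)).neg.congr_deriv ?_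
      field_simp [hneg.ne]
      ring) (by linarith) hrate
  have hlim := tendsto_sub_nhds_zero_iff.1
    (hl.trans_tendsto (tendsto_rpow_nhdsGT_zero (by linarith)))
  have hdiv := (tendsto_div_log_of_tendsto_sub (by simpa only [neg_neg] using hlim.neg)).inv₀ ha
  simpa [mul_comm] using hdiv

lemma isBigO_rpow_or_tendsto_mul_log_of_riccati
    (hf : ∀ᶠ t in 𝓝[>] 0, HasDerivAt f (f' t) t) (hf₀ : Tendsto f (𝓝[>] 0) (𝓝 0)) (ha : 0 < a)
    (hk : 0 < k) (hO : (fun t => t * f' t + a * f t ^ 2) =O[𝓝[>] 0] fun t => t ^ k) :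
    f =O[𝓝[>] 0] (fun t => t ^ k) ∨ Tendsto (fun t => f t * log t) (𝓝[>] 0) (𝓝 a⁻¹) := by
  refine (isBigO_rpow_or_eventually_le_of_riccati (b := k / 4) hf hf₀ ha.le (by linarith)
    (by linarith) hO).imp_right ?_
  rintro ⟨c, hc, hle⟩
  exact tendsto_mul_log_of_riccati hf ha.ne' hc (by linarith) hO hle

end Riccati

/-! ### The reduced flow near the south pole -/

/-- The equations of an axisymmetric `(-1)`-homogeneous flow near the south pole, in the variable
`t = 1 + cos θ → 0⁺`, for which `sin² θ = t (2 - t)`. Here `F = sin θ u_θ`, `G = sin θ u_φ` and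
`H = u_r`, the functions `H₁`, `G₁` are the derivatives of `H`, `G`, and `K` collects the pressure
and the kinetic terms, so that the `r`- and `θ`-components of the momentum equation become the
fields `deriv_radial` and `deriv_head`. -/
structure IsReducedFlow (F H H₁ K G G₁ : ℝ → ℝ) : Prop where
  deriv_F : ∀ᶠ t in 𝓝[>] 0, HasDerivAt F (H t) t
  deriv_H : ∀ᶠ t in 𝓝[>] 0, HasDerivAt H (H₁ t) t
  deriv_radial : ∀ᶠ t in 𝓝[>] 0,
    HasDerivAt (fun t => t * (2 - t) * H₁ t + F t * H t + 2 * F t) (-K t) t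
  deriv_head : ∀ᶠ t in 𝓝[>] 0, HasDerivAt K (2 * G t * G₁ t / (t * (2 - t))) t
  deriv_G : ∀ᶠ t in 𝓝[>] 0, HasDerivAt G (G₁ t) t
  deriv_swirl : ∀ᶠ t in 𝓝[>] 0, HasDerivAt G₁ (-(F t * G₁ t) / (t * (2 - t))) t

lemma tendsto_two_sub_inv_nhdsGT_zero : Tendsto (fun t : ℝ => (2 - t)⁻¹) (𝓝[>] 0) (𝓝 2⁻¹) := by
  simpa using (tendsto_id_nhdsGT_zero.const_sub 2).inv₀ (by norm_num)

namespace IsReducedFlow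

variable {F H H₁ K G G₁ : ℝ → ℝ} {ε : ℝ}

lemma isBigO_swirl_deriv (h : IsReducedFlow F H H₁ K G G₁) (hF : Tendsto F (𝓝[>] 0) (𝓝 2))
    (hε : 0 < ε) : G₁ =O[𝓝[>] 0] fun t => t ^ (-ε - 1) := by
  have hq : Tendsto (fun t => F t * (2 - t)⁻¹) (𝓝[>] 0) (𝓝 (2 * 2⁻¹)) :=
    hF.mul tendsto_two_sub_inv_nhdsGT_zero
  have hbound := isBigO_rpow_of_fuchsian_ode (b := 1 + ε)
    (h.deriv_swirl.mono fun t ht => ht.congr_deriv (by field)) hq (by linarith)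
  simpa only [neg_add, neg_add_eq_sub] using hbound

lemma isBigO_swirl (h : IsReducedFlow F H H₁ K G G₁) (hF : Tendsto F (𝓝[>] 0) (𝓝 2))
    (hε : 0 < ε) : G =O[𝓝[>] 0] fun t => t ^ (-ε) :=
  isBigO_rpow_of_deriv h.deriv_G (neg_lt_zero.2 hε) (h.isBigO_swirl_deriv hF hε)

lemma isBigO_head (h : IsReducedFlow F H H₁ K G G₁) (hF : Tendsto F (𝓝[>] 0) (𝓝 2))
    (hε : 0 < ε) : K =O[𝓝[>] 0] fun t => t ^ (-2 * ε - 1) := by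
  have hinv : (fun t : ℝ => 2 * t⁻¹ * (2 - t)⁻¹) =O[𝓝[>] 0] fun t => t ^ (-1 : ℝ) := by
    simpa only [mul_one] using ((inv_isBigO_rpow_neg_one _).const_mul_left 2).mul
      (tendsto_two_sub_inv_nhdsGT_zero.isBigO_one ℝ)
  refine isBigO_rpow_of_deriv h.deriv_head (by linarith) ((isBigO_rpow_mul
    (isBigO_rpow_mul (h.isBigO_swirl hF hε) (h.isBigO_swirl_deriv hF hε) le_rfl) hinv
    (by linarith)).congr_left fun t => ?_)
  field

lemma isBigO_radial (h : IsReducedFlow F H H₁ K G G₁) (hF : Tendsto F (𝓝[>] 0) (𝓝 2))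
    (hε : 0 < ε) :
    (fun t => t * (2 - t) * H₁ t + F t * H t + 2 * F t) =O[𝓝[>] 0] fun t => t ^ (-2 * ε) :=
  isBigO_rpow_of_deriv h.deriv_radial (by linarith) (h.isBigO_head hF hε).neg_left

/-- The radial momentum equation once integrated: its derivative is the function of
`IsReducedFlow.deriv_radial`. -/
def energy (F H : ℝ → ℝ) (t : ℝ) : ℝ := t * (2 - t) * H t + 2 * (t - 1) * F t + F t ^ 2 / 2

lemma deriv_energy (h : IsReducedFlow F H H₁ K G G₁) : ∀ᶠ t in 𝓝[>] 0,
    HasDerivAt (energy F H) (t * (2 - t) * H₁ t + F t * H t + 2 * F t) t := by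
  filter_upwards [h.deriv_F, h.deriv_H] with t hF hH
  have hid := hasDerivAt_id' t
  refine ((((hid.mul (hid.const_sub 2)).mul hH).add
    (((hid.sub_const 1).const_mul 2).mul hF)).add ((hF.pow 2).div_const 2)).congr_deriv ?_
  simp only [Pi.mul_apply, Nat.cast_ofNat]
  ring

lemma eq_neg_two_of_tendsto_energy (h : IsReducedFlow F H H₁ K G G₁)
    (hF : Tendsto F (𝓝[>] 0) (𝓝 2)) {l : ℝ} (hl : Tendsto (energy F H) (𝓝[>] 0) (𝓝 l)) :
    l = -2 := by
  have htH : Tendsto (fun t => t * H t) (𝓝[>] 0)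
      (𝓝 ((l - 2 * (0 - 1) * 2 - 2 ^ 2 / 2) * 2⁻¹)) := by
    refine (((hl.sub (((tendsto_id_nhdsGT_zero.sub_const 1).const_mul 2).mul hF)).sub
      ((hF.pow 2).div_const 2)).mul tendsto_two_sub_inv_nhdsGT_zero).congr' ?_
    filter_upwards [Ioo_mem_nhdsGT two_pos] with t ht
    have h2t : 2 - t ≠ 0 := (sub_pos.2 ht.2).ne'
    simp only [energy]
    field_simp
    ring
  linarith [eq_zero_of_tendsto_of_tendsto_mul_deriv h.deriv_F hF htH]

lemma isBigO_energy_add_two (h : IsReducedFlow F H H₁ K G G₁) (hF : Tendsto F (𝓝[>] 0) (𝓝 2))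
    (hε : 0 < ε) (hε' : 2 * ε < 1) :
    (fun t => energy F H t + 2) =O[𝓝[>] 0] fun t => t ^ (1 - 2 * ε) := by
  obtain ⟨l, hl⟩ := exists_sub_isBigO_rpow_of_deriv (b := 1 - 2 * ε) h.deriv_energy (by linarith)
    ((h.isBigO_radial hF hε).congr_right fun t => by ring_nf)
  have hlim := tendsto_sub_nhds_zero_iff.1
    (hl.trans_tendsto (tendsto_rpow_nhdsGT_zero (by linarith)))
  obtain rfl := h.eq_neg_two_of_tendsto_energy hF hlim
  simpa only [sub_neg_eq_add] using hl

lemma isBigO_riccati (h : IsReducedFlow F H H₁ K G G₁) (hF : Tendsto F (𝓝[>] 0) (𝓝 2))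
    (hε : 0 < ε) (hε' : 2 * ε < 1) :
    (fun t => t * H t + 1 / 4 * (F t - 2) ^ 2) =O[𝓝[>] 0] fun t => t ^ (1 - 2 * ε) := by
  have hrem : (fun t => t * (2 * F t + 1 / 4 * (F t - 2) ^ 2)) =O[𝓝[>] 0]
      fun t => t ^ (1 - 2 * ε) := by
    have hid := rpow_isBigO_rpow_nhdsGT_zero (show 1 - 2 * ε ≤ 1 by linarith)
    have hbdd := ((hF.const_mul 2).add (((hF.sub_const 2).pow 2).const_mul (1 / 4))).isBigO_one ℝ
    simpa using hid.mul hbdd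
  have hquot := ((h.isBigO_energy_add_two hF hε hε').sub hrem).mul
    (tendsto_two_sub_inv_nhdsGT_zero.isBigO_one ℝ)
  simp only [mul_one] at hquot
  refine hquot.congr' ?_ .rfl
  filter_upwards [Ioo_mem_nhdsGT two_pos] with t ht
  have h2t : 2 - t ≠ 0 := (sub_pos.2 ht.2).ne'
  simp only [energy]
  field_simp
  ring

lemma isBigO_or_tendsto_mul_log (h : IsReducedFlow F H H₁ K G G₁) (hF : Tendsto F (𝓝[>] 0) (𝓝 2))
    (hε : 0 < ε) (hε' : 2 * ε < 1) :
    (fun t => F t - 2) =O[𝓝[>] 0] (fun t => t ^ (1 - 2 * ε)) ∨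
      Tendsto (fun t => (F t - 2) * log t) (𝓝[>] 0) (𝓝 4) := by
  have := isBigO_rpow_or_tendsto_mul_log_of_riccati (a := 1 / 4)
    (h.deriv_F.mono fun t ht => ht.sub_const 2) (by simpa using hF.sub_const 2) (by norm_num)
    (by linarith) (h.isBigO_riccati hF hε hε')
  simpa using this

lemma tendsto_rpow_mul_radial (h : IsReducedFlow F H H₁ K G G₁) (hF : Tendsto F (𝓝[>] 0) (𝓝 2))
    (hO : (fun t => F t - 2) =O[𝓝[>] 0] fun t => t ^ (1 / 2 : ℝ)) (hε : 0 < ε) :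
    Tendsto (fun t => t ^ ε * H t) (𝓝[>] 0) (𝓝 0) := by
  obtain ⟨e, he, heε⟩ := exists_between (show 0 < min (1 / 2) (ε / 2) by positivity)
  obtain ⟨he_half, heε⟩ := lt_min_iff.1 heε
  have htH : (fun t => t * H t) =O[𝓝[>] 0] fun t => t ^ (1 - 2 * e) := by
    refine ((h.isBigO_riccati hF he (by linarith)).sub
      ((isBigO_rpow_mul hO hO (by linarith)).const_mul_left (1 / 4))).congr_left fun t => ?_
    ring
  refine ((isBigO_rpow_mul (Asymptotics.isBigO_refl (fun t : ℝ => t ^ (ε - 1)) _) htH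
    le_rfl).trans_tendsto (tendsto_rpow_nhdsGT_zero (by linarith))).congr' ?_
  filter_upwards [self_mem_nhdsWithin] with t ht
  have ht : 0 < t := ht
  rw [rpow_sub_one ht.ne']
  field_simp

lemma tendsto_mul_log_sq_mul_radial (h : IsReducedFlow F H H₁ K G G₁)
    (hF : Tendsto F (𝓝[>] 0) (𝓝 2)) {m : ℝ}
    (hm : Tendsto (fun t => (F t - 2) * log t) (𝓝[>] 0) (𝓝 m)) :
    Tendsto (fun t => t * log t ^ 2 * H t) (𝓝[>] 0) (𝓝 (-(m ^ 2 / 4))) := by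
  have hpow : Tendsto (fun t : ℝ => t ^ (1 - 2 * (1 / 4) : ℝ) * log t ^ 2) (𝓝[>] 0) (𝓝 0) := by
    have hsq := (tendsto_log_mul_rpow_nhdsGT_zero (r := 1 / 4) (by norm_num)).pow 2
    rw [zero_pow two_ne_zero] at hsq
    refine hsq.congr' ?_
    filter_upwards [self_mem_nhdsWithin] with t ht
    rw [mul_pow, mul_comm, ← rpow_natCast (t ^ (1 / 4 : ℝ)), ← rpow_mul (le_of_lt ht)]
    norm_num
  have hrem := ((h.isBigO_riccati hF (ε := 1 / 4) (by norm_num) (by norm_num)).mul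
    (Asymptotics.isBigO_refl (fun t => log t ^ 2) _)).trans_tendsto hpow
  convert hrem.sub ((hm.pow 2).div_const 4) using 2 <;> ring

lemma deriv_mul_swirl_deriv (h : IsReducedFlow F H H₁ K G G₁) : ∀ᶠ t in 𝓝[>] 0,
    HasDerivAt (fun t => t * G₁ t) (-((t + (F t - 2)) * (2 - t)⁻¹ / t * (t * G₁ t))) t := by
  filter_upwards [h.deriv_swirl, Ioo_mem_nhdsGT two_pos] with t hG₁ ht
  have h2t : 2 - t ≠ 0 := (sub_pos.2 ht.2).ne'
  have ht₀ := ht.1.ne'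
  refine ((hasDerivAt_id' t).mul hG₁).congr_deriv ?_
  field_simp
  ring

lemma exists_eventually_eq_or_tendsto_div_log (h : IsReducedFlow F H H₁ K G G₁)
    (hO : (fun t => F t - 2) =O[𝓝[>] 0] fun t => t ^ (1 / 2 : ℝ)) :
    (∃ c, ∀ᶠ t in 𝓝[>] 0, G t = c) ∨
      ∃ c ≠ 0, Tendsto (fun t => G t / log t) (𝓝[>] 0) (𝓝 c) := by
  have hq : (fun t => (t + (F t - 2)) * (2 - t)⁻¹) =O[𝓝[>] 0] fun t => t ^ (1 / 2 : ℝ) := by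
    have hid := rpow_isBigO_rpow_nhdsGT_zero (show (1 / 2 : ℝ) ≤ 1 by norm_num)
    simp only [rpow_one] at hid
    simpa only [mul_one] using (hid.add hO).mul (tendsto_two_sub_inv_nhdsGT_zero.isBigO_one ℝ)
  obtain ⟨c, hc, hzero⟩ :=
    exists_sub_isBigO_of_fuchsian_ode h.deriv_mul_swirl_deriv (by norm_num) hq
  by_cases hc₀ : c = 0
  · refine Or.inl ?_
    obtain ⟨l, hl⟩ := exists_abs_sub_le_of_abs_deriv_le (Φ := fun _ => 0) (φ := fun _ => 0)
      h.deriv_G (.of_forall fun t => hasDerivAt_const t 0) (by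
        filter_upwards [hzero hc₀, self_mem_nhdsWithin] with t hGt ht
        rw [(mul_eq_zero_iff_left (ne_of_gt ht)).1 hGt, abs_zero]) tendsto_const_nhds
    exact ⟨l, hl.mono fun t ht => sub_eq_zero.1 (abs_nonpos_iff.1 ht)⟩
  · refine Or.inr ⟨c, hc₀, ?_⟩
    obtain ⟨l, hl⟩ := exists_sub_isBigO_rpow_of_deriv (b := 1 / 2 / 2)
      (g := fun t => G t - c * log t) (g' := fun t => (t * G₁ t - c) * t ^ (-1 : ℝ))
      (by filter_upwards [h.deriv_G, self_mem_nhdsWithin] with t hG ht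
          have ht₀ : t ≠ 0 := ne_of_gt ht
          refine (hG.sub ((hasDerivAt_log ht₀).const_mul c)).congr_deriv ?_
          rw [rpow_neg_one]
          field_simp) (by norm_num)
      (isBigO_rpow_mul hc (Asymptotics.isBigO_refl _ _) (by norm_num))
    exact tendsto_div_log_of_tendsto_sub (tendsto_sub_nhds_zero_iff.1
      (hl.trans_tendsto (tendsto_rpow_nhdsGT_zero (by norm_num))))

lemma exists_tendsto_swirl (h : IsReducedFlow F H H₁ K G G₁) {m : ℝ} (hm₂ : 2 < m)
    (hm : Tendsto (fun t => (F t - 2) * log t) (𝓝[>] 0) (𝓝 m)) :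
    ∃ l, Tendsto G (𝓝[>] 0) (𝓝 l) := by
  have hq : Tendsto (fun t => (t + (F t - 2)) * (2 - t)⁻¹ * log t) (𝓝[>] 0) (𝓝 (m / 2)) := by
    have htlog : Tendsto (fun t : ℝ => t * log t) (𝓝[>] 0) (𝓝 0) := by
      simpa [mul_comm] using tendsto_log_mul_rpow_nhdsGT_zero one_pos
    convert (htlog.add hm).mul tendsto_two_sub_inv_nhdsGT_zero using 2 <;> ring
  obtain ⟨b, hb, hbm⟩ := exists_between (show 1 < m / 2 by linarith)
  have hΓ := isBigO_neg_log_rpow_of_fuchsian_ode h.deriv_mul_swirl_deriv hq hbm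
  refine exists_tendsto_of_deriv_isBigO_neg_log h.deriv_G hb
    ((hΓ.mul (Asymptotics.isBigO_refl (fun t : ℝ => t⁻¹) _)).congr' ?_ .rfl)
  filter_upwards [self_mem_nhdsWithin] with t ht
  have ht₀ : t ≠ 0 := ne_of_gt ht
  field_simp

theorem dichotomy (h : IsReducedFlow F H H₁ K G G₁) (hF : Tendsto F (𝓝[>] 0) (𝓝 2)) :
    (Tendsto (fun t => (F t - 2) * log t) (𝓝[>] 0) (𝓝 0) ∧
      (∀ ε > (0 : ℝ), Tendsto (fun t => t ^ ε * H t) (𝓝[>] 0) (𝓝 0)) ∧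
      ((∃ c, ∀ᶠ t in 𝓝[>] 0, G t = c) ∨
        ∃ c ≠ 0, Tendsto (fun t => G t / log t) (𝓝[>] 0) (𝓝 c))) ∨
    (Tendsto (fun t => (F t - 2) * log t) (𝓝[>] 0) (𝓝 4) ∧
      Tendsto (fun t => t * log t ^ 2 * H t) (𝓝[>] 0) (𝓝 (-4)) ∧
      ∃ l, Tendsto G (𝓝[>] 0) (𝓝 l)) := by
  refine (h.isBigO_or_tendsto_mul_log hF (ε := 1 / 4) (by norm_num) (by norm_num)).imp
    (fun hO => ?_) (fun hm => ?_)
  · have hO : (fun t => F t - 2) =O[𝓝[>] 0] fun t => t ^ (1 / 2 : ℝ) := by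
      convert hO using 2; norm_num
    refine ⟨?_, fun ε hε => h.tendsto_rpow_mul_radial hF hO hε,
      h.exists_eventually_eq_or_tendsto_div_log hO⟩
    refine (hO.mul (Asymptotics.isBigO_refl log _)).trans_tendsto ?_
    simpa only [mul_comm] using tendsto_log_mul_rpow_nhdsGT_zero (r := 1 / 2) (by norm_num)
  · refine ⟨hm, ?_, h.exists_tendsto_swirl (by norm_num) hm⟩
    convert h.tendsto_mul_log_sq_mul_radial hF hm using 2
    norm_num

end IsReducedFlow

/-! ### Partial derivatives and the Laplacian on `ℝ³` -/

section PartialDerivatives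

variable {f g : V3 → ℝ} {x : V3} {Φ : ℝ → ℝ}

lemma sum_mul_pd (f : V3 → ℝ) (x v : V3) : ∑ j, v j * pd j f x = fderiv ℝ f x v := by
  conv_rhs => rw [← (EuclideanSpace.basisFun (Fin 3) ℝ).sum_repr v]
  simp [pd, e3]

lemma pd_congr (h : f =ᶠ[𝓝 x] g) (j : Fin 3) : pd j f x = pd j g x := by
  rw [pd, pd, h.fderiv_eq]

lemma lap3_congr (h : f =ᶠ[𝓝 x] g) : lap3 f x = lap3 g x :=
  Finset.sum_congr rfl fun j _ => pd_congr (h.eventuallyEq_nhds.mono fun _ hz => pd_congr hz j) j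

lemma pd_add (hf : DifferentiableAt ℝ f x) (hg : DifferentiableAt ℝ g x) (j : Fin 3) :
    pd j (fun z => f z + g z) x = pd j f x + pd j g x := by
  simp only [pd, fderiv_fun_add hf hg, add_apply]

lemma pd_mul (hf : DifferentiableAt ℝ f x) (hg : DifferentiableAt ℝ g x) (j : Fin 3) :
    pd j (fun z => f z * g z) x = pd j f x * g x + f x * pd j g x := by
  simp only [pd, fderiv_fun_mul hf hg, add_apply, smul_apply, smul_eq_mul]
  ring

lemma pd_const_mul (c : ℝ) (hf : DifferentiableAt ℝ f x) (j : Fin 3) :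
    pd j (fun z => c * f z) x = c * pd j f x := by
  simp only [pd, fderiv_const_mul hf, smul_apply, smul_eq_mul]

lemma pd_comp (hΦ : DifferentiableAt ℝ Φ (f x)) (hf : DifferentiableAt ℝ f x) (j : Fin 3) :
    pd j (fun z => Φ (f z)) x = deriv Φ (f x) * pd j f x := by
  have hcomp : fderiv ℝ (fun z => Φ (f z)) x = deriv Φ (f x) • fderiv ℝ f x :=
    (hΦ.hasDerivAt.comp_hasFDerivAt x hf.hasFDerivAt).fderiv
  rw [pd, hcomp, smul_apply, smul_eq_mul, pd]

lemma pd_continuousLinearMap (ℓ : V3 →L[ℝ] ℝ) (j : Fin 3) : pd j ℓ x = ℓ (e3 j) := by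
  rw [pd, ℓ.fderiv]

lemma differentiableAt_pd (hf : ContDiffAt ℝ 2 f x) (j : Fin 3) :
    DifferentiableAt ℝ (pd j f) x :=
  ((hf.fderiv_right (m := 1) le_rfl).differentiableAt one_ne_zero).clm_apply
    (differentiableAt_const _)

lemma differentiableAt_deriv {y : ℝ} (hΦ : ContDiffAt ℝ 2 Φ y) : DifferentiableAt ℝ (deriv Φ) y :=
  ((hΦ.fderiv_right (m := 1) le_rfl).differentiableAt one_ne_zero).clm_apply
    (differentiableAt_const _)

lemma eventually_differentiableAt {E : Type*} [NormedAddCommGroup E] [NormedSpace ℝ E] {f : E → ℝ}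
    {x : E} (hf : ContDiffAt ℝ 2 f x) : ∀ᶠ z in 𝓝 x, DifferentiableAt ℝ f z :=
  (hf.eventually (by simp)).mono fun _ hz => hz.differentiableAt two_ne_zero

lemma lap3_add (hf : ContDiffAt ℝ 2 f x) (hg : ContDiffAt ℝ 2 g x) :
    lap3 (fun z => f z + g z) x = lap3 f x + lap3 g x := by
  rw [lap3, lap3, lap3, ← Finset.sum_add_distrib]
  refine Finset.sum_congr rfl fun j _ => ?_
  rw [← pd_add (differentiableAt_pd hf j) (differentiableAt_pd hg j)]
  refine pd_congr ?_ j
  filter_upwards [eventually_differentiableAt hf, eventually_differentiableAt hg] with z hfz hgz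
  exact pd_add hfz hgz j

lemma lap3_mul (hf : ContDiffAt ℝ 2 f x) (hg : ContDiffAt ℝ 2 g x) :
    lap3 (fun z => f z * g z) x
      = lap3 f x * g x + 2 * ∑ j, pd j f x * pd j g x + f x * lap3 g x := by
  have hf' := hf.differentiableAt two_ne_zero
  have hg' := hg.differentiableAt two_ne_zero
  have hsecond (j : Fin 3) : pd j (pd j fun z => f z * g z) x
      = pd j (pd j f) x * g x + 2 * (pd j f x * pd j g x) + f x * pd j (pd j g) x := by
    have hfirst : pd j (fun z => f z * g z) =ᶠ[𝓝 x] fun z => pd j f z * g z + f z * pd j g z := by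
      filter_upwards [eventually_differentiableAt hf, eventually_differentiableAt hg] with z hfz hgz
      exact pd_mul hfz hgz j
    rw [pd_congr hfirst, pd_add ((differentiableAt_pd hf j).fun_mul hg')
      (hf'.fun_mul (differentiableAt_pd hg j)), pd_mul (differentiableAt_pd hf j) hg',
      pd_mul hf' (differentiableAt_pd hg j)]
    ring
  simp only [lap3, hsecond, Fin.sum_univ_three]
  ring

lemma lap3_const_mul (c : ℝ) (hf : ContDiffAt ℝ 2 f x) :
    lap3 (fun z => c * f z) x = c * lap3 f x := by
  rw [lap3_mul contDiffAt_const hf]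
  simp [lap3, pd]

lemma lap3_comp (hΦ : ContDiffAt ℝ 2 Φ (f x)) (hf : ContDiffAt ℝ 2 f x) :
    lap3 (fun z => Φ (f z)) x
      = deriv Φ (f x) * lap3 f x + deriv (deriv Φ) (f x) * ∑ j, pd j f x ^ 2 := by
  have hf' := hf.differentiableAt two_ne_zero
  have hsecond (j : Fin 3) : pd j (pd j fun z => Φ (f z)) x
      = deriv Φ (f x) * pd j (pd j f) x + deriv (deriv Φ) (f x) * pd j f x ^ 2 := by
    have hfirst : (pd j fun z => Φ (f z)) =ᶠ[𝓝 x] fun z => deriv Φ (f z) * pd j f z := by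
      filter_upwards [eventually_differentiableAt hf,
        hf'.continuousAt.eventually (eventually_differentiableAt hΦ)] with z hfz hΦz
      exact pd_comp hΦz hfz j
    rw [pd_congr hfirst, pd_mul (f := fun z => deriv Φ (f z))
      ((differentiableAt_deriv hΦ).comp x hf') (differentiableAt_pd hf j),
      pd_comp (differentiableAt_deriv hΦ) hf']
    ring
  simp only [lap3, hsecond, Fin.sum_univ_three]
  ring

lemma lap3_continuousLinearMap (ℓ : V3 →L[ℝ] ℝ) : lap3 ℓ x = 0 := by
  simp [lap3, pd]

end PartialDerivatives

section NormPowers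

variable {x : V3}

lemma sum_sq_eq_norm_sq (x : V3) : ∑ j, x j ^ 2 = ‖x‖ ^ 2 :=
  (EuclideanSpace.real_norm_sq_eq x).symm

lemma contDiffAt_norm_rpow (s : ℝ) (hx : x ≠ 0) : ContDiffAt ℝ 2 (fun z : V3 => ‖z‖ ^ s) x :=
  (contDiffAt_norm ℝ hx).rpow_const_of_ne (norm_ne_zero_iff.2 hx)

lemma pd_norm_rpow (s : ℝ) (hx : x ≠ 0) (j : Fin 3) :
    pd j (fun z => ‖z‖ ^ s) x = s * x j * ‖x‖ ^ (s - 2) := by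
  have hsq : HasFDerivAt (fun z : V3 => (‖z‖ ^ 2) ^ (s / 2))
      ((s / 2 * (‖x‖ ^ 2) ^ (s / 2 - 1)) • (2 • innerSL ℝ x)) x :=
    (hasStrictFDerivAt_norm_sq x).hasFDerivAt.rpow_const (.inl (by simpa using hx))
  have hpow (z : V3) (q : ℝ) : (‖z‖ ^ 2) ^ q = ‖z‖ ^ (2 * q) := by
    rw [← rpow_natCast_mul (norm_nonneg z)]
    norm_num
  simp only [hpow, mul_div_cancel₀ s two_ne_zero, mul_sub, mul_one] at hsq
  have hinner : ⟪x, e3 j⟫_ℝ = x j := by simp [e3, EuclideanSpace.inner_single_right]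
  simp only [pd, hsq.fderiv, smul_apply, innerSL_apply_apply, hinner, smul_eq_mul, nsmul_eq_mul]
  push_cast
  ring

lemma lap3_norm_rpow (s : ℝ) (hx : x ≠ 0) :
    lap3 (fun z => ‖z‖ ^ s) x = s * (s + 1) * ‖x‖ ^ (s - 2) := by
  have hsecond (j : Fin 3) : pd j (pd j fun z => ‖z‖ ^ s) x
      = s * ‖x‖ ^ (s - 2) + s * (s - 2) * ‖x‖ ^ (s - 4) * x j ^ 2 := by
    have hcoord : DifferentiableAt ℝ (fun z : V3 => z j) x := by fun_prop
    have hfirst : (pd j fun z => ‖z‖ ^ s) =ᶠ[𝓝 x] fun z => s * z j * ‖z‖ ^ (s - 2) := by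
      filter_upwards [isOpen_ne.mem_nhds hx] with z hz using pd_norm_rpow s hz j
    have hpd : pd j (fun z => z j) x = 1 := by
      simpa [e3] using pd_continuousLinearMap (x := x) (EuclideanSpace.proj j) j
    rw [pd_congr hfirst, pd_mul (hcoord.const_mul s)
      ((contDiffAt_norm_rpow _ hx).differentiableAt two_ne_zero), pd_norm_rpow _ hx,
      pd_const_mul s hcoord, hpd]
    ring_nf
  have hpow : ‖x‖ ^ (s - 2) = ‖x‖ ^ (s - 4) * ‖x‖ ^ 2 := by
    rw [← rpow_natCast, ← rpow_add (norm_pos_iff.2 hx)]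
    ring_nf
  simp only [lap3, hsecond, Finset.sum_add_distrib, ← Finset.mul_sum, sum_sq_eq_norm_sq]
  rw [hpow, Finset.sum_const, Finset.card_univ, Fintype.card_fin, nsmul_eq_mul]
  push_cast
  ring

variable (ℓ : V3 →L[ℝ] ℝ)

lemma contDiffAt_clm_mul_norm_rpow (s : ℝ) (hx : x ≠ 0) :
    ContDiffAt ℝ 2 (fun z => ℓ z * ‖z‖ ^ s) x :=
  ℓ.contDiff.contDiffAt.mul (contDiffAt_norm_rpow s hx)

lemma pd_clm_mul_norm_rpow (s : ℝ) (hx : x ≠ 0) (j : Fin 3) :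
    pd j (fun z => ℓ z * ‖z‖ ^ s) x = ℓ (e3 j) * ‖x‖ ^ s + s * ℓ x * x j * ‖x‖ ^ (s - 2) := by
  rw [pd_mul ℓ.differentiableAt ((contDiffAt_norm_rpow s hx).differentiableAt two_ne_zero),
    pd_continuousLinearMap, pd_norm_rpow s hx]
  ring

lemma lap3_clm_mul_norm_rpow (s : ℝ) (hx : x ≠ 0) :
    lap3 (fun z => ℓ z * ‖z‖ ^ s) x = s * (s + 3) * ℓ x * ‖x‖ ^ (s - 2) := by
  have heuler : ∑ j, pd j ℓ x * pd j (fun z => ‖z‖ ^ s) x = s * ℓ x * ‖x‖ ^ (s - 2) := by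
    have hℓ := sum_mul_pd ℓ x x
    rw [ℓ.fderiv] at hℓ
    rw [← hℓ, Finset.mul_sum, Finset.sum_mul]
    refine Finset.sum_congr rfl fun j _ => ?_
    rw [pd_norm_rpow s hx]
    ring
  rw [lap3_mul ℓ.contDiff.contDiffAt (contDiffAt_norm_rpow s hx), lap3_continuousLinearMap,
    lap3_norm_rpow s hx, heuler]
  ring

end NormPowers

section PolarAngle

/-- The cosine of the polar angle, `cos θ = x₃ / |x|`. -/
def cosPolar (x : V3) : ℝ := x 2 * ‖x‖ ^ (-1 : ℝ)

lemma cosPolar_of_norm_eq_one {x : V3} (hx : ‖x‖ = 1) : cosPolar x = x 2 := by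
  simp [cosPolar, hx]

lemma contDiffAt_cosPolar {x : V3} (hx : x ≠ 0) : ContDiffAt ℝ 2 cosPolar x :=
  contDiffAt_clm_mul_norm_rpow (EuclideanSpace.proj 2) (-1) hx

variable {x : V3} (hx : ‖x‖ = 1) {M : V3 → ℝ} {Φ : ℝ → ℝ}
include hx

lemma ne_zero_of_norm_eq_one : x ≠ 0 := norm_ne_zero_iff.1 (hx ▸ one_ne_zero)

lemma pd_cosPolar (j : Fin 3) : pd j cosPolar x = e3 j 2 - x 2 * x j := by
  have h := pd_clm_mul_norm_rpow (EuclideanSpace.proj 2) (-1) (ne_zero_of_norm_eq_one hx) j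
  simp only [hx, one_rpow, PiLp.proj_apply] at h
  exact h.trans (by ring)

lemma lap3_cosPolar : lap3 cosPolar x = -2 * x 2 := by
  have h := lap3_clm_mul_norm_rpow (EuclideanSpace.proj 2) (-1) (ne_zero_of_norm_eq_one hx)
  simp only [hx, one_rpow, PiLp.proj_apply] at h
  exact h.trans (by ring)

lemma contDiffAt_mul_comp_cosPolar (hM : ContDiffAt ℝ 2 M x) (hΦ : ContDiffAt ℝ 2 Φ (x 2)) :
    ContDiffAt ℝ 2 (fun z => M z * Φ (cosPolar z)) x :=
  hM.mul (ContDiffAt.comp x (by rwa [cosPolar_of_norm_eq_one hx])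
    (contDiffAt_cosPolar (ne_zero_of_norm_eq_one hx)))

lemma pd_mul_comp_cosPolar (hM : DifferentiableAt ℝ M x) (hΦ : DifferentiableAt ℝ Φ (x 2))
    (j : Fin 3) : pd j (fun z => M z * Φ (cosPolar z)) x
      = pd j M x * Φ (x 2) + M x * deriv Φ (x 2) * (e3 j 2 - x 2 * x j) := by
  have hcos := (contDiffAt_cosPolar (ne_zero_of_norm_eq_one hx)).differentiableAt two_ne_zero
  rw [← cosPolar_of_norm_eq_one hx] at hΦ
  rw [pd_mul (g := fun z => Φ (cosPolar z)) hM (hΦ.comp x hcos), pd_comp hΦ hcos, pd_cosPolar hx,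
    cosPolar_of_norm_eq_one hx]
  ring

lemma lap3_mul_comp_cosPolar (hM : ContDiffAt ℝ 2 M x) (hΦ : ContDiffAt ℝ 2 Φ (x 2)) :
    lap3 (fun z => M z * Φ (cosPolar z)) x
      = lap3 M x * Φ (x 2)
        + 2 * (pd 2 M x - x 2 * fderiv ℝ M x x - x 2 * M x) * deriv Φ (x 2)
        + (1 - x 2 ^ 2) * M x * deriv (deriv Φ) (x 2) := by
  have hcos := contDiffAt_cosPolar (ne_zero_of_norm_eq_one hx)
  have hnorm := sum_sq_eq_norm_sq x
  rw [← cosPolar_of_norm_eq_one hx] at hΦ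
  rw [lap3_mul (g := fun z => Φ (cosPolar z)) hM (hΦ.comp x hcos), lap3_comp hΦ hcos,
    lap3_cosPolar hx, ← sum_mul_pd]
  simp only [pd_comp (hΦ.differentiableAt two_ne_zero) (hcos.differentiableAt two_ne_zero),
    pd_cosPolar hx, cosPolar_of_norm_eq_one hx]
  simp only [Fin.sum_univ_three, hx] at hnorm ⊢
  simp only [e3, PiLp.single_apply, Fin.reduceEq, ↓reduceIte]
  linear_combination M x * x 2 ^ 2 * deriv (deriv Φ) (x 2) * hnorm

end PolarAngle

/-! ### The Navier–Stokes equations for axisymmetric fields -/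

/-- The infinitesimal rotation `(x₁, x₂, x₃) ↦ (-x₂, x₁, 0)` about the `x₃`-axis. -/
def axialRot : V3 →L[ℝ] V3 :=
  (EuclideanSpace.proj 0 : V3 →L[ℝ] ℝ).smulRight (e3 1)
    - (EuclideanSpace.proj 1 : V3 →L[ℝ] ℝ).smulRight (e3 0)

@[simp] lemma axialRot_apply_zero (x : V3) : axialRot x 0 = -x 1 := by simp [axialRot, e3]

@[simp] lemma axialRot_apply_one (x : V3) : axialRot x 1 = x 0 := by simp [axialRot, e3]

@[simp] lemma axialRot_apply_two (x : V3) : axialRot x 2 = 0 := by simp [axialRot, e3]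

/-- The `(-1)`-homogeneous axisymmetric field with profiles `A`, `B`, `N`: on the unit sphere it is
`A x + B (-x₂, x₁, 0) - N e₃`, the profiles being evaluated at `cos θ = x₃`. -/
def axisymField (A B N : ℝ → ℝ) (x : V3) : V3 :=
  ‖x‖ ^ (-2 : ℝ) • (A (cosPolar x) • x + B (cosPolar x) • axialRot x)
    - (‖x‖ ^ (-1 : ℝ) * N (cosPolar x)) • e3 2

lemma axisymField_apply (A B N : ℝ → ℝ) (x : V3) (i : Fin 3) :
    axisymField A B N x i = x i * ‖x‖ ^ (-2 : ℝ) * A (cosPolar x)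
      + axialRot x i * ‖x‖ ^ (-2 : ℝ) * B (cosPolar x)
      + -e3 2 i * ‖x‖ ^ (-1 : ℝ) * N (cosPolar x) := by
  simp only [axisymField, PiLp.sub_apply, PiLp.smul_apply, PiLp.add_apply, smul_eq_mul]
  ring

section UnitSphere

variable {x : V3} (hx : ‖x‖ = 1) {A B N Φ : ℝ → ℝ}
include hx

lemma axisymField_apply_of_norm_eq_one (A B N : ℝ → ℝ) (i : Fin 3) :
    axisymField A B N x i = A (x 2) * x i + B (x 2) * axialRot x i - N (x 2) * e3 2 i := by
  rw [axisymField_apply, cosPolar_of_norm_eq_one hx, hx, one_rpow, one_rpow]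
  ring

lemma pd_clm_mul_norm_rpow_neg_two_mul_comp_cosPolar (ℓ : V3 →L[ℝ] ℝ)
    (hΦ : ContDiffAt ℝ 2 Φ (x 2)) (j : Fin 3) :
    pd j (fun z => ℓ z * ‖z‖ ^ (-2 : ℝ) * Φ (cosPolar z)) x
      = (ℓ (e3 j) - 2 * ℓ x * x j) * Φ (x 2) + ℓ x * deriv Φ (x 2) * (e3 j 2 - x 2 * x j) := by
  have h0 := ne_zero_of_norm_eq_one hx
  rw [pd_mul_comp_cosPolar hx
    ((contDiffAt_clm_mul_norm_rpow ℓ _ h0).differentiableAt two_ne_zero)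
    (hΦ.differentiableAt two_ne_zero), pd_clm_mul_norm_rpow ℓ _ h0, hx, one_rpow, one_rpow]
  ring

lemma lap3_clm_mul_norm_rpow_neg_two_mul_comp_cosPolar (ℓ : V3 →L[ℝ] ℝ)
    (hΦ : ContDiffAt ℝ 2 Φ (x 2)) :
    lap3 (fun z => ℓ z * ‖z‖ ^ (-2 : ℝ) * Φ (cosPolar z)) x
      = -2 * ℓ x * Φ (x 2) + (2 * ℓ (e3 2) - 4 * x 2 * ℓ x) * deriv Φ (x 2)
        + (1 - x 2 ^ 2) * ℓ x * deriv (deriv Φ) (x 2) := by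
  have h0 := ne_zero_of_norm_eq_one hx
  have heuler : fderiv ℝ (fun z => ℓ z * ‖z‖ ^ (-2 : ℝ)) x x = -ℓ x := by
    have hnorm := sum_sq_eq_norm_sq x
    have hℓ := sum_mul_pd ℓ x x
    simp only [pd_continuousLinearMap, ℓ.fderiv, Fin.sum_univ_three, hx] at hℓ hnorm
    simp only [← sum_mul_pd, pd_clm_mul_norm_rpow ℓ _ h0, hx, one_rpow, Fin.sum_univ_three]
    linear_combination hℓ - 2 * ℓ x * hnorm
  rw [lap3_mul_comp_cosPolar hx (contDiffAt_clm_mul_norm_rpow ℓ _ h0) hΦ, heuler,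
    lap3_clm_mul_norm_rpow ℓ _ h0, pd_clm_mul_norm_rpow ℓ _ h0, hx, one_rpow, one_rpow]
  ring

lemma pd_const_mul_norm_rpow_mul_comp_cosPolar (c s : ℝ) (hΦ : DifferentiableAt ℝ Φ (x 2))
    (j : Fin 3) :
    pd j (fun z => c * ‖z‖ ^ s * Φ (cosPolar z)) x
      = c * (s * x j * Φ (x 2) + deriv Φ (x 2) * (e3 j 2 - x 2 * x j)) := by
  have h0 := ne_zero_of_norm_eq_one hx
  have hM := (contDiffAt_norm_rpow s h0).differentiableAt two_ne_zero
  rw [pd_mul_comp_cosPolar hx (hM.const_mul c) hΦ, pd_const_mul c hM, pd_norm_rpow s h0, hx,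
    one_rpow, one_rpow]
  ring

lemma lap3_const_mul_norm_rpow_neg_one_mul_comp_cosPolar (c : ℝ) (hΦ : ContDiffAt ℝ 2 Φ (x 2)) :
    lap3 (fun z => c * ‖z‖ ^ (-1 : ℝ) * Φ (cosPolar z)) x
      = c * (-2 * x 2 * deriv Φ (x 2) + (1 - x 2 ^ 2) * deriv (deriv Φ) (x 2)) := by
  have h0 := ne_zero_of_norm_eq_one hx
  have hM := contDiffAt_norm_rpow (-1) h0
  have heuler : fderiv ℝ (fun z : V3 => ‖z‖ ^ (-1 : ℝ)) x x = -1 := by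
    have hnorm := sum_sq_eq_norm_sq x
    simp only [Fin.sum_univ_three, hx] at hnorm
    simp only [← sum_mul_pd, pd_norm_rpow _ h0, hx, one_rpow, Fin.sum_univ_three]
    linear_combination -hnorm
  simp only [mul_assoc]
  rw [lap3_const_mul c (contDiffAt_mul_comp_cosPolar hx hM hΦ), lap3_mul_comp_cosPolar hx hM hΦ,
    heuler, lap3_norm_rpow _ h0, pd_norm_rpow _ h0, hx, one_rpow, one_rpow]
  ring

end UnitSphere

section Momentum

variable {x : V3} {u : V3 → V3} {A B N : ℝ → ℝ} (hx : ‖x‖ = 1)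
  (hu : u =ᶠ[𝓝 x] axisymField A B N) (hA : ContDiffAt ℝ 2 A (x 2)) (hB : ContDiffAt ℝ 2 B (x 2))
  (hN : ContDiffAt ℝ 2 N (x 2))
include hu

lemma eventuallyEq_axisymField_apply (i : Fin 3) :
    (fun z => u z i) =ᶠ[𝓝 x] fun z =>
      EuclideanSpace.proj (𝕜 := ℝ) i z * ‖z‖ ^ (-2 : ℝ) * A (cosPolar z)
        + (EuclideanSpace.proj (𝕜 := ℝ) i ∘L axialRot) z * ‖z‖ ^ (-2 : ℝ) * B (cosPolar z)
        + -e3 2 i * ‖z‖ ^ (-1 : ℝ) * N (cosPolar z) :=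
  hu.mono fun z hz => (congrArg (· i) hz).trans (axisymField_apply A B N z i)

include hx hA hB hN

lemma pd_axisymField (i j : Fin 3) :
    pd j (fun z => u z i) x = (e3 j i - 2 * x i * x j) * A (x 2)
      + (axialRot (e3 j) i - 2 * axialRot x i * x j) * B (x 2) + e3 2 i * x j * N (x 2)
      + (x i * deriv A (x 2) + axialRot x i * deriv B (x 2) - e3 2 i * deriv N (x 2))
        * (e3 j 2 - x 2 * x j) := by
  have h0 := ne_zero_of_norm_eq_one hx
  have hposA := contDiffAt_mul_comp_cosPolar hx
    (contDiffAt_clm_mul_norm_rpow (EuclideanSpace.proj i) (-2) h0) hA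
  have hrotB := contDiffAt_mul_comp_cosPolar hx
    (contDiffAt_clm_mul_norm_rpow (EuclideanSpace.proj i ∘L axialRot) (-2) h0) hB
  have haxisN := contDiffAt_mul_comp_cosPolar hx
    ((contDiffAt_const (c := -e3 2 i)).mul (contDiffAt_norm_rpow (-1) h0)) hN
  rw [pd_congr (eventuallyEq_axisymField_apply hu i),
    pd_add ((hposA.add hrotB).differentiableAt two_ne_zero) (haxisN.differentiableAt two_ne_zero),
    pd_add (hposA.differentiableAt two_ne_zero) (hrotB.differentiableAt two_ne_zero),
    pd_clm_mul_norm_rpow_neg_two_mul_comp_cosPolar hx _ hA,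
    pd_clm_mul_norm_rpow_neg_two_mul_comp_cosPolar hx _ hB,
    pd_const_mul_norm_rpow_mul_comp_cosPolar hx _ _ (hN.differentiableAt two_ne_zero)]
  simp only [ContinuousLinearMap.comp_apply, PiLp.proj_apply]
  ring

lemma lap3_axisymField (i : Fin 3) :
    lap3 (fun z => u z i) x
      = (-2 * A (x 2) - 4 * x 2 * deriv A (x 2) + (1 - x 2 ^ 2) * deriv (deriv A) (x 2)) * x i
        + (-2 * B (x 2) - 4 * x 2 * deriv B (x 2) + (1 - x 2 ^ 2) * deriv (deriv B) (x 2))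
          * axialRot x i
        + (2 * deriv A (x 2) + 2 * x 2 * deriv N (x 2) - (1 - x 2 ^ 2) * deriv (deriv N) (x 2))
          * e3 2 i := by
  have h0 := ne_zero_of_norm_eq_one hx
  have hposA := contDiffAt_mul_comp_cosPolar hx
    (contDiffAt_clm_mul_norm_rpow (EuclideanSpace.proj i) (-2) h0) hA
  have hrotB := contDiffAt_mul_comp_cosPolar hx
    (contDiffAt_clm_mul_norm_rpow (EuclideanSpace.proj i ∘L axialRot) (-2) h0) hB
  have haxisN := contDiffAt_mul_comp_cosPolar hx
    ((contDiffAt_const (c := -e3 2 i)).mul (contDiffAt_norm_rpow (-1) h0)) hN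
  have hrot : axialRot (e3 2) i = 0 := by simp [axialRot, e3]
  rw [lap3_congr (eventuallyEq_axisymField_apply hu i), lap3_add (hposA.add hrotB) haxisN,
    lap3_add hposA hrotB, lap3_clm_mul_norm_rpow_neg_two_mul_comp_cosPolar hx _ hA,
    lap3_clm_mul_norm_rpow_neg_two_mul_comp_cosPolar hx _ hB,
    lap3_const_mul_norm_rpow_neg_one_mul_comp_cosPolar hx _ hN]
  simp only [ContinuousLinearMap.comp_apply, PiLp.proj_apply, hrot]
  ring

lemma div_axisymField :
    ∑ j, pd j (fun z => u z j) x = A (x 2) + x 2 * N (x 2) - (1 - x 2 ^ 2) * deriv N (x 2) := by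
  have hnorm := sum_sq_eq_norm_sq x
  simp only [Fin.sum_univ_three, hx] at hnorm
  simp only [pd_axisymField hx hu hA hB hN, Fin.sum_univ_three, e3, PiLp.single_apply, Fin.reduceEq,
    ↓reduceIte, zero_ne_one, one_ne_zero, axialRot_apply_zero, axialRot_apply_one,
    axialRot_apply_two]
  linear_combination -(2 * A (x 2) + x 2 * deriv A (x 2)) * hnorm

lemma sum_mul_pd_axisymField (v : V3) (i : Fin 3) :
    ∑ j, v j * pd j (fun z => u z i) x
      = (v i - 2 * x i * ∑ j, v j * x j) * A (x 2)
        + (axialRot v i - 2 * axialRot x i * ∑ j, v j * x j) * B (x 2)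
        + e3 2 i * (∑ j, v j * x j) * N (x 2)
        + (x i * deriv A (x 2) + axialRot x i * deriv B (x 2) - e3 2 i * deriv N (x 2))
          * (v 2 - x 2 * ∑ j, v j * x j) := by
  simp only [pd_axisymField hx hu hA hB hN, Fin.sum_univ_three]
  fin_cases i <;> (simp [e3]; ring)

lemma convective_axisymField (i : Fin 3) :
    ∑ j, u x j * pd j (fun z => u z i) x
      = (A (x 2) ^ 2 - 2 * A (x 2) * (A (x 2) - x 2 * N (x 2)) - B (x 2) ^ 2
          - (1 - x 2 ^ 2) * N (x 2) * deriv A (x 2)) * x i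
        + (2 * x 2 * N (x 2) * B (x 2) - (1 - x 2 ^ 2) * N (x 2) * deriv B (x 2)) * axialRot x i
        + (x 2 * B (x 2) ^ 2 - x 2 * N (x 2) ^ 2 + (1 - x 2 ^ 2) * N (x 2) * deriv N (x 2))
          * e3 2 i := by
  have hnorm := sum_sq_eq_norm_sq x
  have hval (j : Fin 3) : u x j = A (x 2) * x j + B (x 2) * axialRot x j - N (x 2) * e3 2 j := by
    rw [hu.self_of_nhds, axisymField_apply_of_norm_eq_one hx]
  have hradial : ∑ j, u x j * x j = A (x 2) - x 2 * N (x 2) := by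
    simp only [hval, Fin.sum_univ_three, hx, e3, PiLp.single_apply, Fin.reduceEq, ↓reduceIte,
      axialRot_apply_zero, axialRot_apply_one, axialRot_apply_two] at hnorm ⊢
    linear_combination A (x 2) * hnorm
  have hrot : axialRot (u x) i
      = A (x 2) * axialRot x i + B (x 2) * (x 2 * e3 2 i - x i) := by
    fin_cases i <;> simp [hval, e3]
    ring
  have hpolar : u x 2 = x 2 * A (x 2) - N (x 2) := by
    simp only [hval, e3, PiLp.single_eq_same, axialRot_apply_two]
    ring
  rw [sum_mul_pd_axisymField hx hu hA hB hN, hradial, hrot, hpolar, hval]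
  ring

end Momentum

/-- The coefficient of `x` in `-Δu + (u·∇)u` at the unit vectors `x` with `x₃ = y`, where
`u = axisymField A B N`. -/
def radialForce (A B N : ℝ → ℝ) (y : ℝ) : ℝ :=
  2 * A y + 4 * y * deriv A y - (1 - y ^ 2) * deriv (deriv A) y + A y ^ 2
    - 2 * A y * (A y - y * N y) - B y ^ 2 - (1 - y ^ 2) * N y * deriv A y

/-- The coefficient of `axialRot x` in `-Δu + (u·∇)u`, as in `radialForce`. -/
def swirlForce (B N : ℝ → ℝ) (y : ℝ) : ℝ :=
  2 * B y + 4 * y * deriv B y - (1 - y ^ 2) * deriv (deriv B) y + 2 * y * N y * B y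
    - (1 - y ^ 2) * N y * deriv B y

/-- The coefficient of `e₃` in `-Δu + (u·∇)u`, as in `radialForce`. -/
def axialForce (A B N : ℝ → ℝ) (y : ℝ) : ℝ :=
  -2 * deriv A y - 2 * y * deriv N y + (1 - y ^ 2) * deriv (deriv N) y + y * B y ^ 2
    - y * N y ^ 2 + (1 - y ^ 2) * N y * deriv N y

lemma fderiv_apply_self_of_homogeneous {E : Type*} [NormedAddCommGroup E] [NormedSpace ℝ E]
    {f : E → ℝ} {x : E} {s : ℝ} (hf : DifferentiableAt ℝ f x)
    (hhom : ∀ c : ℝ, 0 < c → f (c • x) = c ^ s * f x) : fderiv ℝ f x x = s * f x := by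
  have hray : HasDerivAt (fun c : ℝ => f (c • x)) (fderiv ℝ f x x) 1 :=
    HasFDerivAt.comp_hasDerivAt 1 (by simpa using hf.hasFDerivAt)
      (by simpa using (hasDerivAt_id (1 : ℝ)).smul_const x)
  have hpow : HasDerivAt (fun c : ℝ => c ^ s * f x) (s * f x) 1 := by
    simpa using (hasDerivAt_rpow_const (x := 1) (p := s) (.inl one_ne_zero)).mul_const (f x)
  refine hray.unique (hpow.congr_of_eventuallyEq ?_)
  filter_upwards [lt_mem_nhds zero_lt_one] with c hc using hhom c hc

/-- The curve through `x` which turns around the `x₃`-axis with unit angular speed. -/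
def axialOrbit (x : V3) (s : ℝ) : V3 := cos s • (x - x 2 • e3 2) + sin s • axialRot x + x 2 • e3 2

@[simp] lemma axialOrbit_apply_two (x : V3) (s : ℝ) : axialOrbit x s 2 = x 2 := by
  simp [axialOrbit, e3]

@[simp] lemma axialOrbit_zero (x : V3) : axialOrbit x 0 = x := by simp [axialOrbit]

@[simp] lemma norm_axialOrbit (x : V3) (s : ℝ) : ‖axialOrbit x s‖ = ‖x‖ := by
  refine (sq_eq_sq₀ (norm_nonneg _) (norm_nonneg _)).1 ?_
  rw [← sum_sq_eq_norm_sq, ← sum_sq_eq_norm_sq, Fin.sum_univ_three, Fin.sum_univ_three]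
  simp [axialOrbit, e3]
  linear_combination (x 0 ^ 2 + x 1 ^ 2) * sin_sq_add_cos_sq s

lemma hasDerivAt_axialOrbit_zero (x : V3) : HasDerivAt (axialOrbit x) (axialRot x) 0 := by
  have hturn := ((hasDerivAt_cos 0).smul_const (x - x 2 • e3 2)).add
    ((hasDerivAt_sin 0).smul_const (axialRot x))
  exact (hturn.add_const (x 2 • e3 2)).congr_deriv (by simp)

section NavierStokes

variable {x : V3} {u : V3 → V3} {p : V3 → ℝ} {A B N : ℝ → ℝ} (hx : ‖x‖ = 1)
  (hu : u =ᶠ[𝓝 x] axisymField A B N) (hA : ContDiffAt ℝ 2 A (x 2)) (hB : ContDiffAt ℝ 2 B (x 2))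
  (hN : ContDiffAt ℝ 2 N (x 2)) (hNS : NSEq u p x)
include hx hu hA hB hN hNS

lemma NSEq.pd_pressure (i : Fin 3) : pd i p x =
    -(radialForce A B N (x 2) * x i + swirlForce B N (x 2) * axialRot x i
      + axialForce A B N (x 2) * e3 2 i) := by
  have hmom := hNS.1 i
  rw [lap3_axisymField hx hu hA hB hN, convective_axisymField hx hu hA hB hN] at hmom
  simp only [radialForce, swirlForce, axialForce]
  linear_combination hmom

lemma NSEq.fderiv_pressure (v : V3) : fderiv ℝ p x v =
    -(radialForce A B N (x 2) * ∑ j, v j * x j + swirlForce B N (x 2) * ∑ j, v j * axialRot x j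
      + axialForce A B N (x 2) * v 2) := by
  rw [← sum_mul_pd]
  simp only [hNS.pd_pressure hx hu hA hB hN, Fin.sum_univ_three, e3, PiLp.single_apply,
    Fin.reduceEq, ↓reduceIte, axialRot_apply_zero, axialRot_apply_one, axialRot_apply_two]
  ring

lemma NSEq.radialForce_add_axialForce (hp : DifferentiableAt ℝ p x)
    (hp_hom : ∀ c : ℝ, 0 < c → p (c • x) = (c ^ 2)⁻¹ * p x) :
    radialForce A B N (x 2) + x 2 * axialForce A B N (x 2) = 2 * p x := by
  have hnorm := sum_sq_eq_norm_sq x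
  have heuler := fderiv_apply_self_of_homogeneous (s := -2) hp fun c hc => by
    rw [hp_hom c hc, rpow_neg hc.le, rpow_two]
  rw [hNS.fderiv_pressure hx hu hA hB hN] at heuler
  simp only [Fin.sum_univ_three, hx, axialRot_apply_zero, axialRot_apply_one, axialRot_apply_two]
    at heuler hnorm
  linear_combination -heuler - radialForce A B N (x 2) * hnorm

end NavierStokes

section Meridian

/-- The meridian of the unit sphere in the half-plane `x₂ = 0 < x₁`, parametrized by height. -/
def meridian (y : ℝ) : V3 := √(1 - y ^ 2) • e3 0 + y • e3 2

@[simp] lemma meridian_apply_zero (y : ℝ) : meridian y 0 = √(1 - y ^ 2) := by simp [meridian, e3]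

@[simp] lemma meridian_apply_one (y : ℝ) : meridian y 1 = 0 := by simp [meridian, e3]

@[simp] lemma meridian_apply_two (y : ℝ) : meridian y 2 = y := by simp [meridian, e3]

lemma hasDerivAt_one_sub_sq (y : ℝ) : HasDerivAt (fun y : ℝ => 1 - y ^ 2) (-(2 * y)) y := by
  simpa using (hasDerivAt_pow 2 y).const_sub 1

variable {y : ℝ} (hy : y ∈ Set.Ioo (-1) 1)
include hy

lemma one_sub_sq_pos : 0 < 1 - y ^ 2 := by nlinarith [hy.1, hy.2]

lemma norm_meridian : ‖meridian y‖ = 1 := by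
  refine (sq_eq_sq₀ (norm_nonneg _) zero_le_one).1 ?_
  rw [← sum_sq_eq_norm_sq, Fin.sum_univ_three]
  simp [sq_sqrt (one_sub_sq_pos hy).le]

lemma contDiffAt_sqrt_one_sub_sq : ContDiffAt ℝ 2 (fun y : ℝ => √(1 - y ^ 2)) y :=
  ContDiffAt.sqrt (by fun_prop) (one_sub_sq_pos hy).ne'

lemma contDiffAt_meridian : ContDiffAt ℝ 2 meridian y :=
  ((contDiffAt_sqrt_one_sub_sq hy).smul contDiffAt_const).add (contDiffAt_id.smul contDiffAt_const)

lemma hasDerivAt_meridian :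
    HasDerivAt meridian ((-y / √(1 - y ^ 2)) • e3 0 + e3 2) y := by
  have hsqrt : HasDerivAt (fun y : ℝ => √(1 - y ^ 2)) (-y / √(1 - y ^ 2)) y := by
    refine ((hasDerivAt_one_sub_sq y).sqrt (one_sub_sq_pos hy).ne').congr_deriv ?_
    rw [← mul_neg, mul_div_mul_left _ _ two_ne_zero]
  simpa using! (hsqrt.smul_const (e3 0)).add ((hasDerivAt_id y).smul_const (e3 2))

variable {u : V3 → V3} {p : V3 → ℝ} {A B N : ℝ → ℝ}
  (hu : u =ᶠ[𝓝 (meridian y)] axisymField A B N) (hA : ContDiffAt ℝ 2 A y)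
  (hB : ContDiffAt ℝ 2 B y) (hN : ContDiffAt ℝ 2 N y)

include hu hA hB hN in
lemma NSEq.hasDerivAt_pressure_meridian (hNS : NSEq u p (meridian y))
    (hp : DifferentiableAt ℝ p (meridian y)) :
    HasDerivAt (fun y => p (meridian y)) (-axialForce A B N y) y := by
  rw [← meridian_apply_two y] at hA hB hN
  refine (hp.hasFDerivAt.comp_hasDerivAt y (hasDerivAt_meridian hy)).congr_deriv ?_
  rw [hNS.fderiv_pressure (norm_meridian hy) hu hA hB hN]
  have hs := (sqrt_pos.2 (one_sub_sq_pos hy)).ne'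
  simp only [Fin.sum_univ_three, e3, PiLp.add_apply, PiLp.smul_apply, smul_eq_mul,
    PiLp.single_apply, Fin.reduceEq, ↓reduceIte, one_ne_zero, meridian_apply_zero,
    meridian_apply_one, meridian_apply_two, axialRot_apply_zero, axialRot_apply_one,
    axialRot_apply_two]
  field_simp
  ring

include hu hA hB hN in
lemma swirlForce_eq_zero (hNS : ∀ᶠ z in 𝓝 (meridian y), NSEq u p z)
    (hp : ∀ᶠ z in 𝓝 (meridian y), DifferentiableAt ℝ p z)
    (hp_hom : ∀ᶠ z in 𝓝 (meridian y), ∀ c : ℝ, 0 < c → p (c • z) = (c ^ 2)⁻¹ * p z) :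
    swirlForce B N y = 0 := by
  rw [← meridian_apply_two y] at hA hB hN
  have hderiv : HasDerivAt (fun s => p (axialOrbit (meridian y) s))
      (fderiv ℝ p (meridian y) (axialRot (meridian y))) 0 :=
    HasFDerivAt.comp_hasDerivAt 0 (by simpa using hp.self_of_nhds.hasFDerivAt)
      (hasDerivAt_axialOrbit_zero _)
  have hconst : (fun s => p (axialOrbit (meridian y) s)) =ᶠ[𝓝 0] fun _ =>
      (radialForce A B N y + y * axialForce A B N y) / 2 := by
    have hcont : Tendsto (axialOrbit (meridian y)) (𝓝 0) (𝓝 (meridian y)) := by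
      simpa using (hasDerivAt_axialOrbit_zero (meridian y)).continuousAt.tendsto
    filter_upwards [hcont.eventually (hu.eventuallyEq_nhds.and (hNS.and (hp.and hp_hom)))]
      with s ⟨hus, hNSs, hps, hhoms⟩
    have h := hNSs.radialForce_add_axialForce (by simp [norm_meridian hy]) hus (by simpa using hA)
      (by simpa using hB) (by simpa using hN) hps hhoms
    simp only [axialOrbit_apply_two, meridian_apply_two] at h
    rw [h]
    ring
  have hzero := hderiv.unique ((hasDerivAt_const 0 _).congr_of_eventuallyEq hconst)
  rw [hNS.self_of_nhds.fderiv_pressure (norm_meridian hy) hu hA hB hN] at hzero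
  have hs := sqrt_pos.2 (one_sub_sq_pos hy)
  simpa [Fin.sum_univ_three, hs.ne'] using hzero

end Meridian

/-! ### The reduced system for the profiles -/

/-- The Navier–Stokes equations at height `y ∈ (-1, 1)` for the field `axisymField A B N`, the
pressure being `P` on the unit sphere. -/
structure IsNSProfile (A B N P : ℝ → ℝ) (y : ℝ) : Prop where
  height_mem : y ∈ Set.Ioo (-1) 1
  contDiffAt_position : ContDiffAt ℝ 2 A y
  contDiffAt_rotation : ContDiffAt ℝ 2 B y
  contDiffAt_axis : ContDiffAt ℝ 2 N y
  div_eq_zero : ∀ᶠ z in 𝓝 y, A z + z * N z - (1 - z ^ 2) * deriv N z = 0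
  radialForce_add_axialForce : radialForce A B N y + y * axialForce A B N y = 2 * P y
  swirlForce_eq_zero : swirlForce B N y = 0
  hasDerivAt_pressure : HasDerivAt P (-axialForce A B N y) y

namespace IsNSProfile

variable {A B N P : ℝ → ℝ} {y : ℝ} (h : IsNSProfile A B N P y)
include h

lemma hasDerivAt_position : HasDerivAt A (deriv A y) y :=
  (h.contDiffAt_position.differentiableAt two_ne_zero).hasDerivAt

lemma hasDerivAt_rotation : HasDerivAt B (deriv B y) y :=
  (h.contDiffAt_rotation.differentiableAt two_ne_zero).hasDerivAt

lemma hasDerivAt_axis : HasDerivAt N (deriv N y) y :=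
  (h.contDiffAt_axis.differentiableAt two_ne_zero).hasDerivAt

lemma deriv_div_eq_zero :
    deriv A y + N y + 3 * y * deriv N y - (1 - y ^ 2) * deriv (deriv N) y = 0 := by
  have hdiv := ((h.hasDerivAt_position.add ((hasDerivAt_id y).mul h.hasDerivAt_axis)).sub
    ((hasDerivAt_one_sub_sq y).mul (differentiableAt_deriv h.contDiffAt_axis).hasDerivAt)).unique
      ((hasDerivAt_const y 0).congr_of_eventuallyEq h.div_eq_zero)
  simp only [id] at hdiv
  linear_combination hdiv

lemma hasDerivAt_polar :
    HasDerivAt (fun y => (1 - y ^ 2) * N y) (A y - y * N y) y := by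
  refine ((hasDerivAt_one_sub_sq y).mul h.hasDerivAt_axis).congr_deriv ?_
  linear_combination -h.div_eq_zero.self_of_nhds

lemma hasDerivAt_radial :
    HasDerivAt (fun y => A y - y * N y) (deriv A y - N y - y * deriv N y) y := by
  refine (h.hasDerivAt_position.sub ((hasDerivAt_id y).mul h.hasDerivAt_axis)).congr_deriv ?_
  simp only [id]
  ring

lemma hasDerivAt_azimuthal :
    HasDerivAt (fun y => (1 - y ^ 2) * B y) ((1 - y ^ 2) * deriv B y - 2 * y * B y) y := by
  refine ((hasDerivAt_one_sub_sq y).mul h.hasDerivAt_rotation).congr_deriv ?_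
  ring

lemma hasDerivAt_deriv_azimuthal :
    HasDerivAt (fun y => (1 - y ^ 2) * deriv B y - 2 * y * B y)
      (-((1 - y ^ 2) * N y * ((1 - y ^ 2) * deriv B y - 2 * y * B y)) / (1 - y ^ 2)) y := by
  have hB₁ := (differentiableAt_deriv h.contDiffAt_rotation).hasDerivAt
  have hswirl := h.swirlForce_eq_zero
  refine (((hasDerivAt_one_sub_sq y).mul hB₁).sub
    (((hasDerivAt_id y).const_mul 2).mul h.hasDerivAt_rotation)).congr_deriv ?_
  rw [eq_div_iff (one_sub_sq_pos h.height_mem).ne']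
  simp only [swirlForce, id] at hswirl ⊢
  linear_combination -(1 - y ^ 2) * hswirl

lemma hasDerivAt_radial_flux :
    HasDerivAt (fun y => (1 - y ^ 2) * (deriv A y - N y - y * deriv N y)
        + (1 - y ^ 2) * N y * (A y - y * N y) + 2 * ((1 - y ^ 2) * N y))
      (-((1 - y ^ 2) * B y ^ 2 + 2 * P y - 2 * (A y - y * N y) + (1 - y ^ 2) * N y ^ 2)) y := by
  have hA₁ := (differentiableAt_deriv h.contDiffAt_position).hasDerivAt
  have hN₁ := (differentiableAt_deriv h.contDiffAt_axis).hasDerivAt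
  have hforce := h.radialForce_add_axialForce
  have hH₁ := (hA₁.sub h.hasDerivAt_axis).sub ((hasDerivAt_id y).mul hN₁)
  refine ((((hasDerivAt_one_sub_sq y).mul hH₁).add (h.hasDerivAt_polar.mul h.hasDerivAt_radial)).add
    (h.hasDerivAt_polar.const_mul 2)).congr_deriv ?_
  simp only [radialForce, axialForce, Pi.sub_apply, Pi.mul_apply, id] at hforce ⊢
  linear_combination -hforce + 2 * h.div_eq_zero.self_of_nhds

lemma hasDerivAt_head :
    HasDerivAt (fun y => (1 - y ^ 2) * B y ^ 2 + 2 * P y - 2 * (A y - y * N y)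
        + (1 - y ^ 2) * N y ^ 2)
      (2 * ((1 - y ^ 2) * B y) * ((1 - y ^ 2) * deriv B y - 2 * y * B y) / (1 - y ^ 2)) y := by
  have hq := hasDerivAt_one_sub_sq y
  refine ((((hq.mul (h.hasDerivAt_rotation.pow 2)).add (h.hasDerivAt_pressure.const_mul 2)).sub
    (h.hasDerivAt_radial.const_mul 2)).add (hq.mul (h.hasDerivAt_axis.pow 2))).congr_deriv ?_
  rw [eq_div_iff (one_sub_sq_pos h.height_mem).ne']
  simp only [axialForce, Pi.pow_apply]
  push_cast
  linear_combination 2 * (1 - y ^ 2) * h.deriv_div_eq_zero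

end IsNSProfile

lemma isReducedFlow_of_isNSProfile {A B N P : ℝ → ℝ}
    (h : ∀ᶠ t in 𝓝[>] (0 : ℝ), IsNSProfile A B N P (t - 1)) :
    IsReducedFlow (fun t => (1 - (t - 1) ^ 2) * N (t - 1))
      (fun t => A (t - 1) - (t - 1) * N (t - 1))
      (fun t => deriv A (t - 1) - N (t - 1) - (t - 1) * deriv N (t - 1))
      (fun t => (1 - (t - 1) ^ 2) * B (t - 1) ^ 2 + 2 * P (t - 1)
        - 2 * (A (t - 1) - (t - 1) * N (t - 1)) + (1 - (t - 1) ^ 2) * N (t - 1) ^ 2)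
      (fun t => (1 - (t - 1) ^ 2) * B (t - 1))
      (fun t => (1 - (t - 1) ^ 2) * deriv B (t - 1) - 2 * (t - 1) * B (t - 1)) := by
  have hq (t : ℝ) : t * (2 - t) = 1 - (t - 1) ^ 2 := by ring
  exact
    { deriv_F := h.mono fun t ht => ht.hasDerivAt_polar.comp_sub_const t 1
      deriv_H := h.mono fun t ht => ht.hasDerivAt_radial.comp_sub_const t 1
      deriv_radial := by
        simpa only [hq] using h.mono fun t ht => ht.hasDerivAt_radial_flux.comp_sub_const t 1
      deriv_head := by
        simpa only [hq] using h.mono fun t ht => ht.hasDerivAt_head.comp_sub_const t 1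
      deriv_G := h.mono fun t ht => ht.hasDerivAt_azimuthal.comp_sub_const t 1
      deriv_swirl := by
        simpa only [hq] using h.mono fun t ht => ht.hasDerivAt_deriv_azimuthal.comp_sub_const t 1 }

/-! ### Profiles of an axisymmetric solution -/

lemma sq_add_sq_eq_rho_sq (x : V3) : x 0 ^ 2 + x 1 ^ 2 = rho x ^ 2 :=
  (sq_sqrt (by positivity)).symm

lemma norm_sq_eq_rho_sq_add_sq (x : V3) : ‖x‖ ^ 2 = rho x ^ 2 + x 2 ^ 2 := by
  rw [← sq_add_sq_eq_rho_sq, ← sum_sq_eq_norm_sq, Fin.sum_univ_three]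

lemma rho_nonneg (x : V3) : 0 ≤ rho x := sqrt_nonneg _

lemma norm_ne_zero_of_rho_ne_zero {x : V3} (hx : rho x ≠ 0) : ‖x‖ ≠ 0 := by
  contrapose! hx
  simp [norm_eq_zero.1 hx, rho]

lemma eq_sphericalComponents (u : V3 → V3) {x : V3} (hx : rho x ≠ 0) :
    u x = uRc u x • eRv x + uTc u x • eThv x + uPc u x • ePhv x := by
  have hr := norm_ne_zero_of_rho_ne_zero hx
  have hrho := sq_add_sq_eq_rho_sq x
  have hnorm := norm_sq_eq_rho_sq_add_sq x
  ext i
  fin_cases i <;> simp [uRc, uTc, uPc, eRv, eThv, ePhv] <;> field_simp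
  · linear_combination -u x 0 * ‖x‖ ^ 2 * hrho + x 0 * (u x 0 * x 0 + u x 1 * x 1) * hnorm
  · linear_combination -u x 1 * ‖x‖ ^ 2 * hrho + x 1 * (u x 0 * x 0 + u x 1 * x 1) * hnorm
  · linear_combination u x 2 * hnorm

lemma cosPolar_smul {c : ℝ} (hc : 0 < c) (x : V3) : cosPolar (c • x) = cosPolar x := by
  simp only [cosPolar, PiLp.smul_apply, smul_eq_mul, norm_smul, norm_of_nonneg hc.le,
    mul_rpow hc.le (norm_nonneg x), rpow_neg_one]
  field_simp

lemma norm_mul_cosPolar (x : V3) : ‖x‖ * cosPolar x = x 2 := by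
  rcases eq_or_ne x 0 with rfl | hx
  · simp
  · rw [cosPolar, rpow_neg_one, mul_left_comm, mul_inv_cancel₀ (norm_ne_zero_iff.2 hx), mul_one]

lemma axisymField_smul (A B N : ℝ → ℝ) {c : ℝ} (hc : 0 < c) (x : V3) :
    axisymField A B N (c • x) = c⁻¹ • axisymField A B N x := by
  ext i
  simp only [axisymField_apply, PiLp.smul_apply, smul_eq_mul, norm_smul, norm_of_nonneg hc.le,
    mul_rpow hc.le (norm_nonneg x), cosPolar_smul hc, map_smul]
  rw [rpow_neg hc.le 2, rpow_two, rpow_neg_one]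
  field_simp

section Components

variable (A B N : ℝ → ℝ) {x : V3} (hx : rho x ≠ 0)
include hx

lemma uRc_axisymField :
    uRc (axisymField A B N) x = (A (cosPolar x) - cosPolar x * N (cosPolar x)) / ‖x‖ := by
  have hr := norm_ne_zero_of_rho_ne_zero hx
  have hpolar := norm_mul_cosPolar x
  simp only [uRc, axisymField_apply, rpow_neg (norm_nonneg x), rpow_ofNat, rpow_one, e3,
    PiLp.single_apply, Fin.reduceEq, ↓reduceIte, axialRot_apply_zero, axialRot_apply_one,
    axialRot_apply_two]
  field_simp
  linear_combination A (cosPolar x) * (sq_add_sq_eq_rho_sq x - norm_sq_eq_rho_sq_add_sq x)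
    + ‖x‖ * N (cosPolar x) * hpolar

lemma uTc_axisymField :
    uTc (axisymField A B N) x = rho x * N (cosPolar x) / ‖x‖ ^ 2 := by
  have hr := norm_ne_zero_of_rho_ne_zero hx
  simp only [uTc, axisymField_apply, rpow_neg (norm_nonneg x), rpow_ofNat, rpow_one, e3,
    PiLp.single_apply, Fin.reduceEq, ↓reduceIte, axialRot_apply_zero, axialRot_apply_one,
    axialRot_apply_two]
  field_simp
  linear_combination x 2 * A (cosPolar x) * sq_add_sq_eq_rho_sq x

lemma uPc_axisymField :
    uPc (axisymField A B N) x = rho x * B (cosPolar x) / ‖x‖ ^ 2 := by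
  have hr := norm_ne_zero_of_rho_ne_zero hx
  simp only [uPc, axisymField_apply, rpow_neg (norm_nonneg x), rpow_ofNat, rpow_one, e3,
    PiLp.single_apply, Fin.reduceEq, ↓reduceIte, axialRot_apply_zero, axialRot_apply_one]
  field_simp
  linear_combination B (cosPolar x) * sq_add_sq_eq_rho_sq x

end Components

lemma rho_eq_sqrt (x : V3) : rho x = √(‖x‖ ^ 2 - x 2 ^ 2) := by
  rw [norm_sq_eq_rho_sq_add_sq, add_sub_cancel_right, sqrt_sq (rho_nonneg x)]

lemma rho_ne_zero_of_cosPolar_mem {x : V3} (hx : x ≠ 0) (hy : cosPolar x ∈ Set.Ioo (-1) 1) :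
    rho x ≠ 0 := by
  rw [rho_eq_sqrt, ← norm_mul_cosPolar]
  refine (sqrt_pos.2 ?_).ne'
  linear_combination mul_pos (pow_pos (norm_pos_iff.2 hx) 2) (one_sub_sq_pos hy)

lemma axisymOn_axisymField (A B N : ℝ → ℝ) : AxisymOn (axisymField A B N) {x | rho x ≠ 0} := by
  intro x hx w hw hnorm htwo
  have hpolar : cosPolar x = cosPolar w := by rw [cosPolar, cosPolar, hnorm, htwo]
  have hrho : rho x = rho w := by rw [rho_eq_sqrt, rho_eq_sqrt, hnorm, htwo]
  rw [uRc_axisymField A B N hx, uTc_axisymField A B N hx, uPc_axisymField A B N hx,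
    uRc_axisymField A B N hw, uTc_axisymField A B N hw, uPc_axisymField A B N hw, hnorm, hpolar,
    hrho]
  exact ⟨rfl, rfl, rfl⟩

/-- The profile `A` of `axisymField A B N`, read off along `meridian`. -/
def positionProfile (u : V3 → V3) (y : ℝ) : ℝ := u (meridian y) 0 / √(1 - y ^ 2)

/-- The profile `B` of `axisymField A B N`, read off along `meridian`. -/
def rotationProfile (u : V3 → V3) (y : ℝ) : ℝ := u (meridian y) 1 / √(1 - y ^ 2)

/-- The profile `N` of `axisymField A B N`, read off along `meridian`. -/
def axisProfile (u : V3 → V3) (y : ℝ) : ℝ := y * positionProfile u y - u (meridian y) 2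

/-- `u` is a `(-1)`-homogeneous axisymmetric solution of the Navier–Stokes equations on the open
cone `Ω`, with a `(-2)`-homogeneous pressure `p`. -/
structure IsAxisymSolution (u : V3 → V3) (p : V3 → ℝ) (Ω : Set V3) : Prop where
  isOpen : IsOpen Ω
  smul_mem : ∀ x ∈ Ω, ∀ c : ℝ, 0 < c → c • x ∈ Ω
  apply_smul : ∀ x ∈ Ω, ∀ c : ℝ, 0 < c → u (c • x) = c⁻¹ • u x
  pressure_smul : ∀ x ∈ Ω, ∀ c : ℝ, 0 < c → p (c • x) = (c ^ 2)⁻¹ * p x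
  contDiffOn : ContDiffOn ℝ 2 u Ω
  differentiableOn_pressure : DifferentiableOn ℝ p Ω
  axisymOn : AxisymOn u Ω
  nsEq : ∀ x ∈ Ω, NSEq u p x

lemma axisymField_meridian {y : ℝ} (hy : y ∈ Set.Ioo (-1) 1) (u : V3 → V3) :
    axisymField (positionProfile u) (rotationProfile u) (axisProfile u) (meridian y)
      = u (meridian y) := by
  have hs := (sqrt_pos.2 (one_sub_sq_pos hy)).ne'
  ext i
  rw [axisymField_apply_of_norm_eq_one (norm_meridian hy), meridian_apply_two]
  fin_cases i <;> simp [positionProfile, rotationProfile, axisProfile, e3] <;> field_simp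
  ring

lemma contDiffAt_profiles {u : V3 → V3} {y : ℝ} (hy : y ∈ Set.Ioo (-1) 1)
    (hu : ContDiffAt ℝ 2 u (meridian y)) :
    ContDiffAt ℝ 2 (positionProfile u) y ∧ ContDiffAt ℝ 2 (rotationProfile u) y ∧
      ContDiffAt ℝ 2 (axisProfile u) y := by
  have hs := (sqrt_pos.2 (one_sub_sq_pos hy)).ne'
  have hsqrt := contDiffAt_sqrt_one_sub_sq hy
  have hcomp (i : Fin 3) : ContDiffAt ℝ 2 (fun y => u (meridian y) i) y :=
    (EuclideanSpace.proj (𝕜 := ℝ) i).contDiff.contDiffAt.comp y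
      (hu.comp y (contDiffAt_meridian hy))
  have hA : ContDiffAt ℝ 2 (positionProfile u) y := (hcomp 0).div hsqrt hs
  exact ⟨hA, (hcomp 1).div hsqrt hs, (contDiffAt_id.mul hA).sub (hcomp 2)⟩

namespace IsAxisymSolution

variable {u : V3 → V3} {p : V3 → ℝ} {Ω : Set V3} (h : IsAxisymSolution u p Ω)
include h

lemma eq_axisymField {x : V3} (hx : x ∈ Ω) (hx0 : x ≠ 0) (hy : cosPolar x ∈ Set.Ioo (-1) 1)
    (hm : meridian (cosPolar x) ∈ Ω) :
    u x = axisymField (positionProfile u) (rotationProfile u) (axisProfile u) x := by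
  have hr := norm_pos_iff.2 hx0
  set w := ‖x‖ • meridian (cosPolar x) with hw
  set U := axisymField (positionProfile u) (rotationProfile u) (axisProfile u) with hU
  have hw_mem : w ∈ Ω := h.smul_mem _ hm _ hr
  have hw_norm : ‖x‖ = ‖w‖ := by simp [hw, norm_smul, norm_meridian hy]
  have hw_two : x 2 = w 2 := by simp [hw, norm_mul_cosPolar]
  have hx_rho := rho_ne_zero_of_cosPolar_mem hx0 hy
  have hw_rho : rho w ≠ 0 := by rwa [rho_eq_sqrt, ← hw_norm, ← hw_two, ← rho_eq_sqrt]
  have huw : u w = U w := by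
    rw [hw, hU, h.apply_smul _ hm _ hr, axisymField_smul _ _ _ hr, axisymField_meridian hy]
  obtain ⟨huR, huT, huP⟩ := h.axisymOn x hx w hw_mem hw_norm hw_two
  obtain ⟨hUR, hUT, hUP⟩ := axisymOn_axisymField _ _ _ x hx_rho w hw_rho hw_norm hw_two
  rw [eq_sphericalComponents u hx_rho, eq_sphericalComponents U hx_rho, huR, huT, huP, hUR, hUT,
    hUP]
  simp only [uRc, uTc, uPc, huw, hU]

lemma eventuallyEq_axisymField {y : ℝ} (hy : y ∈ Set.Ioo (-1) 1) (hm : meridian y ∈ Ω) :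
    u =ᶠ[𝓝 (meridian y)]
      axisymField (positionProfile u) (rotationProfile u) (axisProfile u) := by
  have hpolar : Tendsto cosPolar (𝓝 (meridian y)) (𝓝 y) := by
    have hcont := (contDiffAt_cosPolar (ne_zero_of_norm_eq_one (norm_meridian hy))).continuousAt
    simpa [ContinuousAt, cosPolar_of_norm_eq_one (norm_meridian hy)] using hcont
  have hmeridian := (contDiffAt_meridian hy).continuousAt.tendsto.comp hpolar
  filter_upwards [h.isOpen.mem_nhds hm, hpolar.eventually (isOpen_Ioo.mem_nhds hy),
    hmeridian.eventually (h.isOpen.mem_nhds hm),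
    eventually_ne_nhds (ne_zero_of_norm_eq_one (norm_meridian hy))] with z hz hz_polar hzm hz0
  exact h.eq_axisymField hz hz0 hz_polar hzm

lemma isNSProfile {y : ℝ} (hy : y ∈ Set.Ioo (-1) 1) (hm : meridian y ∈ Ω) :
    IsNSProfile (positionProfile u) (rotationProfile u) (axisProfile u) (fun y => p (meridian y))
      y := by
  have hprofiles {z : ℝ} (hz : z ∈ Set.Ioo (-1) 1) (hmz : meridian z ∈ Ω) :=
    contDiffAt_profiles hz (h.contDiffOn.contDiffAt (h.isOpen.mem_nhds hmz))
  have hΩ := h.isOpen.eventually_mem hm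
  have hp {x : V3} (hx : x ∈ Ω) := h.differentiableOn_pressure.differentiableAt
    (h.isOpen.mem_nhds hx)
  have hu := h.eventuallyEq_axisymField hy hm
  obtain ⟨hA, hB, hN⟩ := hprofiles hy hm
  refine
    { height_mem := hy
      contDiffAt_position := hA
      contDiffAt_rotation := hB
      contDiffAt_axis := hN
      div_eq_zero := ?_
      radialForce_add_axialForce := ?_
      swirlForce_eq_zero := swirlForce_eq_zero hy hu hA hB hN (hΩ.mono h.nsEq)
        (hΩ.mono fun x hx => hp hx) (hΩ.mono h.pressure_smul)
      hasDerivAt_pressure :=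
        (h.nsEq _ hm).hasDerivAt_pressure_meridian hy hu hA hB hN (hp hm) }
  · filter_upwards [isOpen_Ioo.mem_nhds hy,
      (contDiffAt_meridian hy).continuousAt.eventually_mem (h.isOpen.mem_nhds hm)] with z hz hmz
    obtain ⟨hAz, hBz, hNz⟩ := hprofiles hz hmz
    have hdiv := div_axisymField (norm_meridian hz) (h.eventuallyEq_axisymField hz hmz)
      (by simpa using hAz) (by simpa using hBz) (by simpa using hNz)
    rw [(h.nsEq _ hmz).2, meridian_apply_two] at hdiv
    exact hdiv.symm
  · have hforce := (h.nsEq _ hm).radialForce_add_axialForce (norm_meridian hy) hu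
      (by simpa using hA) (by simpa using hB) (by simpa using hN) (hp hm) (h.pressure_smul _ hm)
    rwa [meridian_apply_two] at hforce

end IsAxisymSolution

/-! ### The neighbourhood of the south pole -/

lemma smul_mem_cone3 {Ω : Set V3} {x : V3} (hx : x ∈ cone3 Ω) {c : ℝ} (hc : 0 < c) :
    c • x ∈ cone3 Ω := by
  refine ⟨smul_ne_zero hc.ne' hx.1, ?_⟩
  rw [norm_smul, norm_of_nonneg hc.le, smul_smul, mul_inv_rev, inv_mul_cancel_right₀ hc.ne']
  exact hx.2

lemma mem_cone3_of_norm_eq_one {Ω : Set V3} {x : V3} (hx : ‖x‖ = 1) (hxΩ : x ∈ Ω) :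
    x ∈ cone3 Ω :=
  ⟨ne_zero_of_norm_eq_one hx, by rwa [hx, inv_one, one_smul]⟩

lemma isOpen_cone3_NSCap (δ : ℝ) : IsOpen (cone3 (NSCap δ)) := by
  have hcone : cone3 (NSCap δ) = {0}ᶜ ∩ (fun x : V3 => ‖x‖⁻¹ • x) ⁻¹' (ball S3 δ \ {S3}) := by
    ext x
    simp only [cone3, NSCap, sphere2, Set.mem_ofPred_eq, Set.mem_inter_iff, Set.mem_compl_iff,
      Set.mem_singleton_iff, Set.mem_preimage, Set.mem_sdiff, mem_sphere_zero_iff_norm]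
    refine and_congr_right fun hx => ?_
    rw [norm_smul, norm_inv, norm_norm, inv_mul_cancel₀ (norm_ne_zero_iff.2 hx)]
    simp only [true_and]
  rw [hcone]
  refine ContinuousOn.isOpen_inter_preimage ?_ isOpen_compl_singleton
    (isOpen_ball.sdiff isClosed_singleton)
  exact (continuousOn_id.norm.inv₀ fun x hx => norm_ne_zero_iff.2 hx).smul continuousOn_id

lemma eventually_mem_cone3_NSCap {δ : ℝ} (hδ : 0 < δ) :
    ∀ᶠ x in 𝓝[sphere2 \ {S3}] S3, x ∈ cone3 (NSCap δ) := by
  filter_upwards [self_mem_nhdsWithin, nhdsWithin_le_nhds (ball_mem_nhds S3 hδ)] with x hx hxδ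
  exact mem_cone3_of_norm_eq_one (mem_sphere_zero_iff_norm.1 hx.1) ⟨⟨hx.1, hxδ⟩, hx.2⟩

lemma S3_apply_two : S3 2 = -1 := by simp [S3]

lemma meridian_neg_one : meridian (-1) = S3 := by
  ext i
  fin_cases i <;> simp [S3]

lemma height_mem_Icc {x : V3} (hx : ‖x‖ = 1) : x 2 ∈ Set.Icc (-1) 1 := by
  have hnorm := norm_sq_eq_rho_sq_add_sq x
  rw [hx, one_pow] at hnorm
  exact abs_le.1 ((sq_le_one_iff_abs_le_one _).1 (by linarith [sq_nonneg (rho x)]))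

lemma eq_S3_of_height_eq_neg_one {x : V3} (hx : ‖x‖ = 1) (h : x 2 = -1) : x = S3 := by
  have hrho := norm_sq_eq_rho_sq_add_sq x
  rw [← sq_add_sq_eq_rho_sq, hx, h] at hrho
  have h0 : x 0 = 0 := by nlinarith
  have h1 : x 1 = 0 := by nlinarith
  ext i
  fin_cases i <;> simp [S3, h0, h1, h]

lemma tendsto_height_add_one :
    Tendsto (fun x : V3 => x 2 + 1) (𝓝[sphere2 \ {S3}] S3) (𝓝[>] 0) := by
  refine tendsto_nhdsWithin_iff.2 ⟨?_, ?_⟩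
  · have hcont : Continuous fun x : V3 => x 2 + 1 := by fun_prop
    simpa [S3_apply_two] using (hcont.tendsto S3).mono_left nhdsWithin_le_nhds
  · filter_upwards [self_mem_nhdsWithin] with x hx
    have hnorm := mem_sphere_zero_iff_norm.1 hx.1
    have hne : x 2 ≠ -1 := fun h => hx.2 (eq_S3_of_height_eq_neg_one hnorm h)
    exact neg_lt_iff_pos_add.1 ((height_mem_Icc hnorm).1.lt_of_ne' hne)

lemma eventually_sub_one_mem_Ioo : ∀ᶠ t in 𝓝[>] (0 : ℝ), t - 1 ∈ Set.Ioo (-1) 1 := by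
  filter_upwards [Ioo_mem_nhdsGT two_pos] with t ht
  exact ⟨by linarith [ht.1], by linarith [ht.2]⟩

lemma tendsto_meridian_sub_one :
    Tendsto (fun t : ℝ => meridian (t - 1)) (𝓝[>] 0) (𝓝[sphere2 \ {S3}] S3) := by
  refine tendsto_nhdsWithin_iff.2 ⟨?_, ?_⟩
  · have hcont : Continuous fun t : ℝ => meridian (t - 1) := by
      unfold meridian
      fun_prop
    have hlim := hcont.tendsto 0
    rw [zero_sub, meridian_neg_one] at hlim
    exact hlim.mono_left nhdsWithin_le_nhds
  · filter_upwards [eventually_sub_one_mem_Ioo] with t ht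
    refine ⟨mem_sphere_zero_iff_norm.2 (norm_meridian ht), fun h => ht.1.ne' ?_⟩
    rw [← meridian_apply_two (t - 1), Set.mem_singleton_iff.1 h, S3_apply_two]

section Rescaling

lemma tendsto_rho_sq_div_height_add_one :
    Tendsto (fun x => rho x ^ 2 / (x 2 + 1)) (𝓝[sphere2 \ {S3}] S3) (𝓝 2) := by
  have hcont : Continuous fun x : V3 => 1 - x 2 := by fun_prop
  have hlim := (hcont.tendsto S3).mono_left (nhdsWithin_le_nhds (s := sphere2 \ {S3}))
  rw [S3_apply_two, sub_neg_eq_add, one_add_one_eq_two] at hlim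
  refine hlim.congr' ?_
  filter_upwards [self_mem_nhdsWithin, tendsto_height_add_one.eventually self_mem_nhdsWithin]
    with x hx ht
  have hnorm := norm_sq_eq_rho_sq_add_sq x
  rw [mem_sphere_zero_iff_norm.1 hx.1] at hnorm
  rw [eq_div_iff (ne_of_gt ht)]
  linear_combination hnorm

lemma tendsto_log_rho_div_log_height_add_one :
    Tendsto (fun x => log (rho x) / log (x 2 + 1)) (𝓝[sphere2 \ {S3}] S3) (𝓝 (1 / 2)) := by
  have hratio := tendsto_rho_sq_div_height_add_one
  have hlog := (hratio.log two_ne_zero).div_atBot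
    (tendsto_log_nhdsGT_zero.comp tendsto_height_add_one)
  have hlim := (hlog.add_const 1).div_const 2
  rw [zero_add] at hlim
  refine hlim.congr' ?_
  filter_upwards [hratio.eventually_ne two_ne_zero,
    tendsto_height_add_one.eventually (Ioo_mem_nhdsGT one_pos)] with x hx ht
  have hlogt := (log_neg ht.1 ht.2).ne
  have hrho : rho x ≠ 0 := by
    rintro h
    simp [h] at hx
  rw [Function.comp_apply, log_div (pow_ne_zero 2 hrho) ht.1.ne', log_pow]
  field_simp
  push_cast
  ring

variable {f : V3 → ℝ} {F : ℝ → ℝ} {c : ℝ}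
  (hf : f =ᶠ[𝓝[sphere2 \ {S3}] S3] fun x => F (x 2 + 1))
include hf

lemma tendsto_mul_log_rho (hF : Tendsto (fun t => F t * log t) (𝓝[>] 0) (𝓝 c)) :
    Tendsto (fun x => f x * log (rho x)) (𝓝[sphere2 \ {S3}] S3) (𝓝 (c / 2)) := by
  have hlim := (hF.comp tendsto_height_add_one).mul tendsto_log_rho_div_log_height_add_one
  rw [mul_one_div] at hlim
  refine hlim.congr' ?_
  filter_upwards [hf, tendsto_height_add_one.eventually (Ioo_mem_nhdsGT one_pos)] with x hx ht
  have hlogt := (log_neg ht.1 ht.2).ne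
  rw [hx, Function.comp_apply]
  field_simp

lemma tendsto_div_log_rho (hF : Tendsto (fun t => F t / log t) (𝓝[>] 0) (𝓝 c)) :
    Tendsto (fun x => f x / log (rho x)) (𝓝[sphere2 \ {S3}] S3) (𝓝 (2 * c)) := by
  have hlim := (hF.comp tendsto_height_add_one).div tendsto_log_rho_div_log_height_add_one
    one_half_pos.ne'
  rw [one_div, div_inv_eq_mul, mul_comm] at hlim
  refine hlim.congr' ?_
  filter_upwards [hf, tendsto_height_add_one.eventually (Ioo_mem_nhdsGT one_pos)] with x hx ht
  rw [hx]
  exact div_div_div_cancel_right₀ (log_neg ht.1 ht.2).ne _ _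

lemma tendsto_rho_rpow_mul {ε : ℝ}
    (hF : Tendsto (fun t => t ^ (ε / 2) * F t) (𝓝[>] 0) (𝓝 0)) :
    Tendsto (fun x => rho x ^ ε * f x) (𝓝[sphere2 \ {S3}] S3) (𝓝 0) := by
  have hlim := (tendsto_rho_sq_div_height_add_one.rpow_const (p := ε / 2) (.inl two_ne_zero)).mul
    (hF.comp tendsto_height_add_one)
  rw [mul_zero] at hlim
  refine hlim.congr' ?_
  filter_upwards [hf, tendsto_height_add_one.eventually self_mem_nhdsWithin] with x hx ht
  have hpow : rho x ^ ε = (rho x ^ 2 / (x 2 + 1)) ^ (ε / 2) * (x 2 + 1) ^ (ε / 2) := by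
    rw [← mul_rpow (div_nonneg (sq_nonneg _) (le_of_lt ht)) (le_of_lt ht),
      div_mul_cancel₀ _ (ne_of_gt ht), ← rpow_two, ← rpow_mul (rho_nonneg x),
      mul_div_cancel₀ _ two_ne_zero]
  rw [hx, hpow, Function.comp_apply, mul_assoc]

lemma tendsto_rho_sq_mul_log_rho_sq_mul
    (hF : Tendsto (fun t => t * log t ^ 2 * F t) (𝓝[>] 0) (𝓝 c)) :
    Tendsto (fun x => rho x ^ 2 * log (rho x) ^ 2 * f x) (𝓝[sphere2 \ {S3}] S3)
      (𝓝 (c / 2)) := by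
  have hlim := (tendsto_rho_sq_div_height_add_one.mul
    (tendsto_log_rho_div_log_height_add_one.pow 2)).mul (hF.comp tendsto_height_add_one)
  rw [show 2 * (1 / 2 : ℝ) ^ 2 * c = c / 2 by ring] at hlim
  refine hlim.congr' ?_
  filter_upwards [hf, tendsto_height_add_one.eventually (Ioo_mem_nhdsGT one_pos)] with x hx ht
  have hlogt := (log_neg ht.1 ht.2).ne
  have ht0 := ht.1.ne'
  rw [hx, Function.comp_apply]
  field_simp

end Rescaling

namespace IsAxisymSolution

variable {u : V3 → V3} {p : V3 → ℝ} {Ω : Set V3} (h : IsAxisymSolution u p Ω)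
include h

lemma components_of_norm_eq_one {x : V3} (hx : ‖x‖ = 1) (hxΩ : x ∈ Ω)
    (hy : x 2 ∈ Set.Ioo (-1) 1) (hm : meridian (x 2) ∈ Ω) :
    rho x * uTc u x = (1 - x 2 ^ 2) * axisProfile u (x 2) ∧
      uRc u x = positionProfile u (x 2) - x 2 * axisProfile u (x 2) ∧
      rho x * uPc u x = (1 - x 2 ^ 2) * rotationProfile u (x 2) := by
  have hpolar := cosPolar_of_norm_eq_one hx
  have hx0 := ne_zero_of_norm_eq_one hx
  rw [← hpolar] at hy hm
  have hux := h.eq_axisymField hxΩ hx0 hy hm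
  have hrho := rho_ne_zero_of_cosPolar_mem hx0 hy
  have hrho_sq : rho x ^ 2 = 1 - x 2 ^ 2 := by
    rw [← one_pow 2, ← hx, norm_sq_eq_rho_sq_add_sq, add_sub_cancel_right]
  have hT := uTc_axisymField (positionProfile u) (rotationProfile u) (axisProfile u) hrho
  have hR := uRc_axisymField (positionProfile u) (rotationProfile u) (axisProfile u) hrho
  have hP := uPc_axisymField (positionProfile u) (rotationProfile u) (axisProfile u) hrho
  simp only [uTc, uRc, uPc, ← hux, hpolar, hx] at hT hR hP ⊢
  refine ⟨?_, ?_, ?_⟩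
  · rw [hT, ← hrho_sq]
    ring
  · rw [hR, div_one]
  · rw [hP, ← hrho_sq]
    ring

lemma exists_isReducedFlow (hΩ : ∀ᶠ x in 𝓝[sphere2 \ {S3}] S3, x ∈ Ω) :
    ∃ F H H₁ K G G₁ : ℝ → ℝ, IsReducedFlow F H H₁ K G G₁ ∧
      (fun x => rho x * uTc u x) =ᶠ[𝓝[sphere2 \ {S3}] S3] (fun x => F (x 2 + 1)) ∧
      uRc u =ᶠ[𝓝[sphere2 \ {S3}] S3] (fun x => H (x 2 + 1)) ∧
      (fun x => rho x * uPc u x) =ᶠ[𝓝[sphere2 \ {S3}] S3] (fun x => G (x 2 + 1)) := by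
  have hmeridian : ∀ᶠ t in 𝓝[>] (0 : ℝ), t - 1 ∈ Set.Ioo (-1) 1 ∧ meridian (t - 1) ∈ Ω :=
    eventually_sub_one_mem_Ioo.and (tendsto_meridian_sub_one.eventually hΩ)
  have hcomp := (tendsto_height_add_one.eventually hmeridian).and (hΩ.and self_mem_nhdsWithin)
  refine ⟨_, _, _, _, _, _, isReducedFlow_of_isNSProfile
    (hmeridian.mono fun t ht => h.isNSProfile ht.1 ht.2), ?_, ?_, ?_⟩
  all_goals
    filter_upwards [hcomp] with x hx
    simp only [add_sub_cancel_right] at hx ⊢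
    have hsphere := mem_sphere_zero_iff_norm.1 hx.2.2.1
    obtain ⟨hT, hR, hP⟩ := h.components_of_norm_eq_one hsphere hx.2.1 hx.1.1 hx.1.2
    assumption

end IsAxisymSolution

lemma tendsto_nhdsGT_of_tendsto_pole {f : V3 → ℝ} {F : ℝ → ℝ} {l : Filter ℝ}
    (hf : f =ᶠ[𝓝[sphere2 \ {S3}] S3] fun x => F (x 2 + 1))
    (hlim : Tendsto f (𝓝[sphere2 \ {S3}] S3) l) : Tendsto F (𝓝[>] 0) l := by
  refine ((hlim.congr' hf).comp tendsto_meridian_sub_one).congr fun t => ?_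
  simp only [Function.comp_apply, meridian_apply_two, sub_add_cancel]

/-- expansion when `τ = 2`. -/
theorem expansion_tau_eq_two (δ : ℝ) (hδ : 0 < δ) (u : V3 → V3) (p : V3 → ℝ)
    (hu_hom : ∀ x ∈ cone3 (NSCap δ), ∀ lam : ℝ, 0 < lam → u (lam • x) = lam⁻¹ • u x)
    (hp_hom : ∀ x ∈ cone3 (NSCap δ), ∀ lam : ℝ, 0 < lam → p (lam • x) = (lam ^ 2)⁻¹ * p x)
    (hu_reg : ContDiffOn ℝ 2 u (cone3 (NSCap δ)))
    (hp_reg : ContDiffOn ℝ 1 p (cone3 (NSCap δ)))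
    (haxi : AxisymOn u (cone3 (NSCap δ)))
    (hNS : ∀ x ∈ cone3 (NSCap δ), NSEq u p x)
    (hτ : Tendsto (fun x => rho x * uTc u x) (𝓝[sphere2 \ {S3}] S3) (𝓝 2)) :
    ∃ η : ℝ,
      Tendsto (fun x => (rho x * uTc u x - 2) * Real.log (rho x))
        (𝓝[sphere2 \ {S3}] S3) (𝓝 η) ∧
      (η = 0 ∨ η = 2) ∧
      (η = 0 →
        (∀ ε > (0:ℝ), Tendsto (fun x => rho x ^ ε * uRc u x)
          (𝓝[sphere2 \ {S3}] S3) (𝓝 0)) ∧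
        ((∃ c : ℝ, ∀ᶠ x in 𝓝[sphere2 \ {S3}] S3, rho x * uPc u x = c) ∨
          (∃ L : ℝ, L ≠ 0 ∧ Tendsto (fun x => rho x * uPc u x / Real.log (rho x))
            (𝓝[sphere2 \ {S3}] S3) (𝓝 L)))) ∧
      (η = 2 →
        Tendsto (fun x => rho x ^ 2 * (Real.log (rho x)) ^ 2 * uRc u x)
          (𝓝[sphere2 \ {S3}] S3) (𝓝 (-2)) ∧
        ∃ L : ℝ, Tendsto (fun x => rho x * uPc u x) (𝓝[sphere2 \ {S3}] S3) (𝓝 L)) := by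
  have hsol : IsAxisymSolution u p (cone3 (NSCap δ)) :=
    ⟨isOpen_cone3_NSCap δ, fun _ hx _ hc => smul_mem_cone3 hx hc, hu_hom, hp_hom, hu_reg,
      hp_reg.differentiableOn one_ne_zero, haxi, hNS⟩
  obtain ⟨F, H, H₁, K, G, G₁, hflow, hF, hH, hG⟩ :=
    hsol.exists_isReducedFlow (eventually_mem_cone3_NSCap hδ)
  have hF_sub := hF.fun_comp (· - 2)
  rcases hflow.dichotomy (tendsto_nhdsGT_of_tendsto_pole hF hτ) with
    ⟨hη, hradial, hswirl⟩ | ⟨hη, hradial, l, hswirl⟩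
  · refine ⟨0, by simpa using! tendsto_mul_log_rho hF_sub hη, .inl rfl,
      fun _ => ⟨fun ε hε => tendsto_rho_rpow_mul hH (hradial (ε / 2) (half_pos hε)), ?_⟩,
      fun h => absurd h two_ne_zero.symm⟩
    rcases hswirl with ⟨c, hc⟩ | ⟨c, hc, hlim⟩
    · exact .inl ⟨c, (hG.and (tendsto_height_add_one.eventually hc)).mono
        fun x hx => hx.1.trans hx.2⟩
    · exact .inr ⟨2 * c, mul_ne_zero two_ne_zero hc, tendsto_div_log_rho hG hlim⟩
  · refine ⟨2, ?_, .inr rfl, fun h => absurd h two_ne_zero, fun _ => ⟨?_, l, ?_⟩⟩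
    · exact (tendsto_mul_log_rho hF_sub hη).mono_right (by norm_num)
    · exact (tendsto_rho_sq_mul_log_rho_sq_mul hH hradial).mono_right (by norm_num)
    · exact (hswirl.comp tendsto_height_add_one).congr' hG.symm
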